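/- Let d ≥ 5 and n ≥ 4, and let D_0 be a clustering of an n-element configuration in Z^d in which every cluster has 2 or 3 elements, with distinct cluster labels i and j. There is a number c = c(d,n) > 0 such that for all t ∈ Z_{≥0}, Q_{D_0}(ξ_1^{i,j} > t) ≤ 2·e^{−ct}, where ξ_1^{i,j} is the first time t ≥ 1 at which the i-th and j-th clusters of the IHAT chain both belong to Ref. -/

import Mathlib

open MeasureTheory

namespace HATFormal

/-- Points of the lattice `ℤ^d`. -/
abbrev Pt (d : ℕ) := Fin d → ℤ

/-- The `2d` unit steps of the simple random walk on `ℤ^d`. -/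
def Dir (d : ℕ) : Set (Pt d) :=
  {s | ∃ i : Fin d, s = Pi.single i 1 ∨ s = Pi.single i (-1)}

/-- The position, after `t` steps, of the walk started at `x` with steps `s`. -/
def wpos (d : ℕ) (x : Pt d) {T : ℕ} (s : Fin T → Pt d) (t : ℕ) : Pt d :=
  x + ∑ i ∈ Finset.univ.filter (fun i : Fin T => (i : ℕ) < t), s i

/-- The probability of an event `P` of the first `T` steps of simple random walk on `ℤ^d`. -/
noncomputable def prob (d T : ℕ) (P : (Fin T → Pt d) → Prop) : ℝ :=
  (Nat.card {s : Fin T → Pt d // (∀ i, s i ∈ Dir d) ∧ P s} : ℝ) / ((2 * d : ℕ) : ℝ) ^ T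

open Classical in
/-- `esc d A x = P_x(τ_A = ∞)` if `x ∈ A`, and `0` otherwise. -/
noncomputable def esc (d : ℕ) (A : Set (Pt d)) (x : Pt d) : ℝ :=
  if x ∈ A then ⨅ T : ℕ, prob d T (fun s => ∀ t, 1 ≤ t → t ≤ T → wpos d x s t ∉ A) else 0

/-- The capacity of `A`. -/
noncomputable def capa (d : ℕ) (A : Set (Pt d)) : ℝ := ∑' x : A, esc d A (x : Pt d)

/-- The harmonic measure `H_A(x) = esc_A(x) / cap_A`. -/
noncomputable def harm (d : ℕ) (A : Set (Pt d)) (x : Pt d) : ℝ := esc d A x / capa d A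

/-- `P_x(τ_W < ∞)`. -/
noncomputable def retProb (d : ℕ) (W : Set (Pt d)) (x : Pt d) : ℝ :=
  ∑' t : ℕ, prob d t (fun s => 1 ≤ t ∧ wpos d x s t ∈ W ∧
    ∀ u, 1 ≤ u → u < t → wpos d x s u ∉ W)

/-- `P_x(τ_W < ∞ and S_{τ_W − 1} = y)`. -/
noncomputable def hitFrom (d : ℕ) (W : Set (Pt d)) (x y : Pt d) : ℝ :=
  ∑' t : ℕ, prob d t (fun s => 1 ≤ t ∧ wpos d x s t ∈ W ∧ wpos d x s (t - 1) = y ∧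
    ∀ u, 1 ≤ u → u < t → wpos d x s u ∉ W)

/-- `P_x(τ_W < ∞ and S_{τ_W} ∈ T)`. -/
noncomputable def firstHitIn (d : ℕ) (W T : Set (Pt d)) (x : Pt d) : ℝ :=
  ∑' t : ℕ, prob d t (fun s => 1 ≤ t ∧ wpos d x s t ∈ W ∧ wpos d x s t ∈ T ∧
    ∀ u, 1 ≤ u → u < t → wpos d x s u ∉ W)

/-- `P_x(S_{τ_W − 1} = y ∣ τ_W < ∞)`. -/
noncomputable def transP (d : ℕ) (W : Set (Pt d)) (x y : Pt d) : ℝ :=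
  hitFrom d W x y / retProb d W x

/-- The Green's function of simple random walk on `ℤ^d`. -/
noncomputable def green (d : ℕ) (x : Pt d) : ℝ :=
  ∑' t : ℕ, prob d t (fun s => wpos d x s t = 0)

/-- Configurations: finite subsets of `ℤ^d`. -/
abbrev Conf (d : ℕ) := Finset (Pt d)

/-- `p_U(x, y)`, the probability that HAT activates at `x` and transports to `y`. -/
noncomputable def pHAT (d : ℕ) (U : Conf d) (x y : Pt d) : ℝ :=
  harm d (↑U) x * transP d ((↑U : Set (Pt d)) \ {x}) x y

open Classical in
/-- The transition probabilities of HAT. -/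
noncomputable def hatProb (d : ℕ) (U V : Conf d) : ℝ :=
  if V = U then ∑' z : Pt d, pHAT d U z z
  else ∑' x : Pt d, ∑' y : Pt d,
    if x ∈ U ∧ x ≠ y ∧ V = insert y (U.erase x) then pHAT d U x y else 0

instance (d : ℕ) : MeasurableSpace (Conf d) := ⊤

/-- `μ` is the law of HAT started from `U`. -/
def IsHATLaw (d : ℕ) (U : Conf d) (μ : Measure (ℕ → Conf d)) : Prop :=
  IsProbabilityMeasure μ ∧
  ∀ (t : ℕ) (u : ℕ → Conf d),
    μ {ω | ∀ s ≤ t, ω s = u s} =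
      (if u 0 = U then 1 else 0) *
        ∏ s ∈ Finset.range t, ENNReal.ofReal (hatProb d (u s) (u (s + 1)))

/-- A signed permutation plus translation of `ℤ^d`. -/
def SymImage (d : ℕ) (σ : Equiv.Perm (Fin d)) (ε : Fin d → ℤ) (v : Pt d) (x : Pt d) : Pt d :=
  fun i => v i + ε i * x (σ i)

/-- `SymEq d U V` holds when `V = gU` for a symmetry `g` of `ℤ^d`. -/
def SymEq (d : ℕ) (U V : Conf d) : Prop :=
  ∃ (σ : Equiv.Perm (Fin d)) (ε : Fin d → ℤ) (v : Pt d),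
    (∀ i, ε i = 1 ∨ ε i = -1) ∧ V = U.image (SymImage d σ ε v)

/-- Euclidean distance on `ℤ^d`. -/
noncomputable def dist0 (d : ℕ) (x y : Pt d) : ℝ :=
  Real.sqrt (∑ i, ((x i : ℝ) - (y i : ℝ)) ^ 2)

/-- Euclidean distance between finite subsets of `ℤ^d`. -/
noncomputable def setDist (d : ℕ) (A B : Finset (Pt d)) : ℝ :=
  sInf {r : ℝ | ∃ x ∈ A, ∃ y ∈ B, r = dist0 d x y}

/-- Euclidean diameter of a finite subset of `ℤ^d`. -/
noncomputable def diam0 (d : ℕ) (A : Finset (Pt d)) : ℝ :=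
  sSup {r : ℝ | ∃ x ∈ A, ∃ y ∈ A, r = dist0 d x y}

/-- Lattice (nearest-neighbor) adjacency in `ℤ^d`. -/
def latAdj (d : ℕ) (x y : Pt d) : Prop := (∑ i, (x i - y i).natAbs) = 1

/-- Exterior lattice boundary of a set. -/
def bdry (d : ℕ) (A : Set (Pt d)) : Set (Pt d) := {z | z ∉ A ∧ ∃ w ∈ A, latAdj d z w}

/-- Non-isolated configurations: some exposed element has a lattice neighbor in the set. -/
def NonIso (d : ℕ) (U : Conf d) : Prop :=
  ∃ x ∈ U, 0 < esc d (↑U) x ∧ ∃ y ∈ U, latAdj d x y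

/-- `C` is a clustering (ordered partition into nonempty clusters) of `U`. -/
def IsClusteringOf (d : ℕ) {k : ℕ} (C : Fin k → Finset (Pt d)) (U : Finset (Pt d)) : Prop :=
  (∀ i, (C i).Nonempty) ∧ (∀ i j, i ≠ j → Disjoint (C i) (C j)) ∧
    Finset.univ.biUnion C = U

/-- `C^{≠ i}`, the union of the clusters other than `i`. -/
def others (d : ℕ) {k : ℕ} (C : Fin k → Finset (Pt d)) (i : Fin k) : Finset (Pt d) :=
  Finset.univ.biUnion fun j => if j = i then ∅ else C j

/-- The separation of a clustering. -/
noncomputable def sep (d : ℕ) {k : ℕ} (C : Fin k → Finset (Pt d)) : ℝ :=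
  ⨅ i, setDist d (C i) (others d C i)

/-- `(a, b)` separated dimer-or-trimer (DOT) clusterings. -/
def IsDOT (d : ℕ) {k : ℕ} (C : Fin k → Finset (Pt d)) (a b : ℝ) : Prop :=
  (∀ i, (C i).card = 2 ∨ (C i).card = 3) ∧ a ≤ sep d C ∧
    ∀ i, diam0 d (C i) ≤ b * Real.log (setDist d (C i) (others d C i))

/-- Clusterings with an unspecified number of clusters. -/
abbrev ClusteringS (d : ℕ) := Σ k : ℕ, Fin k → Finset (Pt d)

/-- `π(C)`, the union of the clusters of `C`. -/
def confOf (d : ℕ) (C : ClusteringS d) : Conf d := Finset.univ.biUnion C.2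

/-- `C ∈ 𝒞(U, a, b)`. -/
def InC (d : ℕ) (U : Conf d) (a b : ℝ) (C : ClusteringS d) : Prop :=
  IsClusteringOf d C.2 U ∧ IsDOT d C.2 a b

/-- `U ∈ 𝒰_{d,n}(a, b)`. -/
def InU (d n : ℕ) (a b : ℝ) (U : Conf d) : Prop :=
  U.card = n ∧ ∃ C : ClusteringS d, InC d U a b C

/-- `C` is a clustering of an `n`-element configuration. -/
def IsClusteringConf (d n : ℕ) (C : ClusteringS d) : Prop :=
  (∀ i, (C.2 i).Nonempty) ∧ (∀ i j, i ≠ j → Disjoint (C.2 i) (C.2 j)) ∧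
    (confOf d C).card = n

open Classical in
/-- One step of the natural clustering. -/
noncomputable def clustStep (d : ℕ) (Ut Ut1 : Conf d) (C : ClusteringS d) : ClusteringS d :=
  if Ut1 = Ut then C
  else if h : ∃ p : Pt d × Pt d × Fin C.1,
      Ut \ Ut1 = {p.1} ∧ Ut1 \ Ut = {p.2.1} ∧ p.1 ∈ C.2 p.2.2 then
    ⟨C.1, Function.update C.2 h.choose.2.2
      (insert h.choose.2.1 ((C.2 h.choose.2.2).erase h.choose.1))⟩
  else ⟨1, fun _ => Ut1⟩

/-- The natural clustering of the trajectory `ω` with initial clustering `C0`. -/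
noncomputable def natClust (d : ℕ) (ω : ℕ → Conf d) (C0 : ClusteringS d) : ℕ → ClusteringS d
  | 0 => C0
  | t + 1 => clustStep d (ω t) (ω (t + 1)) (natClust d ω C0 t)

/-- `a_s = s^{1/2 − n^{−100}} + 100 n`. -/
noncomputable def aSep (n s : ℕ) : ℝ :=
  (s : ℝ) ^ ((1 : ℝ) / 2 - (n : ℝ) ^ (-(100 : ℝ))) + 100 * n

/-- `C^{i, x, y}`: remove `x` from cluster `i` of `C` and add `y` to that cluster. -/
def updC (d : ℕ) (C : ClusteringS d) (i : Fin C.1) (x y : Pt d) : ClusteringS d :=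
  ⟨C.1, Function.update C.2 i (insert y ((C.2 i).erase x))⟩

open Classical in
/-- The transition probabilities of the lifting of HAT to clusterings. -/
noncomputable def liftProb (d : ℕ) (E0 E1 : ClusteringS d) : ℝ :=
  ∑' x : Pt d, ∑' y : Pt d,
    if ∃ i : Fin E0.1, x ∈ E0.2 i ∧ E1 = updC d E0 i x y
    then pHAT d (confOf d E0) x y else 0

/-- The capacity of a clustering: the sum of the capacities of its clusters. -/
noncomputable def capS (d : ℕ) (C : ClusteringS d) : ℝ := ∑ i, capa d (↑(C.2 i))

/-- `H_C(i, x) = esc_{C^i}(x) / cap_C`. -/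
noncomputable def harmS (d : ℕ) (C : ClusteringS d) (i : Fin C.1) (x : Pt d) : ℝ :=
  esc d (↑(C.2 i)) x / capS d C

/-- `q_C(i, x, y)`. -/
noncomputable def qIHAT (d : ℕ) (C : ClusteringS d) (i : Fin C.1) (x y : Pt d) : ℝ :=
  harmS d C i x * transP d ((↑(C.2 i) : Set (Pt d)) \ {x}) x y

open Classical in
/-- The transition probabilities of intracluster HAT (IHAT). -/
noncomputable def ihatProb (d : ℕ) (D E : ClusteringS d) : ℝ :=
  ∑' x : Pt d, ∑' y : Pt d, ∑ i : Fin D.1,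
    if x ∈ D.2 i ∧ E = updC d D i x y then qIHAT d D i x y else 0

instance (d : ℕ) : MeasurableSpace (ClusteringS d) := ⊤

open Classical in
/-- `μ` is the law of the lifted HAT chain started from `E0`. -/
def IsLiftLaw (d : ℕ) (E0 : ClusteringS d) (μ : Measure (ℕ → ClusteringS d)) : Prop :=
  IsProbabilityMeasure μ ∧
  ∀ (t : ℕ) (u : ℕ → ClusteringS d),
    μ {ω | ∀ s ≤ t, ω s = u s} =
      (if u 0 = E0 then 1 else 0) *
        ∏ s ∈ Finset.range t, ENNReal.ofReal (liftProb d (u s) (u (s + 1)))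

open Classical in
/-- `μ` is the law of intracluster HAT started from `D0`. -/
def IsIHATLaw (d : ℕ) (D0 : ClusteringS d) (μ : Measure (ℕ → ClusteringS d)) : Prop :=
  IsProbabilityMeasure μ ∧
  ∀ (t : ℕ) (u : ℕ → ClusteringS d),
    μ {ω | ∀ s ≤ t, ω s = u s} =
      (if u 0 = D0 then 1 else 0) *
        ∏ s ∈ Finset.range t, ENNReal.ofReal (ihatProb d (u s) (u (s + 1)))

/-- `Pairs(E0, E1)`. -/
def Pairs (d : ℕ) (E0 E1 : ClusteringS d) : Set (Pt d × Pt d) :=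
  {p | 0 < pHAT d (confOf d E0) p.1 p.2 ∧
    ∃ i : Fin E0.1, p.1 ∈ E0.2 i ∧ E1 = updC d E0 i p.1 p.2}

/-- `Triples(E0, E1)`. -/
def Triples (d : ℕ) (E0 E1 : ClusteringS d) : Set (Fin E0.1 × Pt d × Pt d) :=
  {q | 0 < qIHAT d E0 q.1 q.2.1 q.2.2 ∧ E1 = updC d E0 q.1 q.2.1 q.2.2}

/-- The first standard basis vector of `ℤ^d`. -/
def e1v (d : ℕ) : Pt d := fun i => if (i : ℕ) = 0 then 1 else 0

/-- Reference dimers and trimers. -/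
def Ref (d : ℕ) : Set (Finset (Pt d)) :=
  {A | ∃ x : Pt d, A = {x, x + e1v d} ∨ A = {x, x + e1v d, x + e1v d + e1v d}}

/-- *-adjacency in `ℤ^d`: distinct points differing by at most one in each coordinate. -/
def starAdj (d : ℕ) (x y : Pt d) : Prop := x ≠ y ∧ ∀ i, (x i - y i).natAbs ≤ 1

/-- The *-visible boundary of `A`. -/
def visBdry (d : ℕ) (A : Finset (Pt d)) : Set (Pt d) :=
  {x | (∃ y ∈ A, starAdj d x y) ∧
    ∃ γ : ℕ → Pt d, γ 0 = x ∧ (∀ t, latAdj d (γ t) (γ (t + 1))) ∧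
      (∀ t, γ t ∉ A) ∧ ∀ r : ℝ, ∃ t, r < dist0 d (γ t) 0}

/-- `A` is connected in the nearest-neighbor graph of `ℤ^d`. -/
def LatConnected (d : ℕ) (A : Finset (Pt d)) : Prop :=
  ∀ x ∈ A, ∀ y ∈ A, ∃ (L : ℕ) (γ : ℕ → Pt d), γ 0 = x ∧ γ L = y ∧
    (∀ t < L, latAdj d (γ t) (γ (t + 1))) ∧ ∀ t ≤ L, γ t ∈ A

/-- Strict lexicographic order on `ℤ^d`. -/
def lexLt (d : ℕ) (x y : Pt d) : Prop :=
  ∃ i : Fin d, (∀ j, j < i → x j = y j) ∧ x i < y i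

/-- `x` is the lex (least) element of `A`. -/
def IsLex (d : ℕ) (A : Finset (Pt d)) (x : Pt d) : Prop :=
  x ∈ A ∧ ∀ y ∈ A, y ≠ x → lexLt d x y

/-!
The function `√(5 / (|x|² + 5))` is superharmonic for simple random walk in dimension `d ≥ 3`, so a
walker who has moved `7 * d` steps away from a set of at most `d` points then never returns with
probability at least `1 / 2`. Hence every point of a cluster of two or three points is activated
with probability bounded below, uniformly in the positions of all clusters.

The activated point reattaches next to some remaining point `w` of its cluster. Inserting at most
two steps before the hit, at a bounded cost, makes it land at `w + e₁` or `w - e₁` instead. One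
such move turns a pair into a reference pair, and two such moves turn a triple into a reference
triple. From any state, all clusters therefore become reference clusters within `2 * n` steps with
probability at least `p ^ (2 * n)`, and the Markov property at the multiples of `2 * n` gives the
exponential tail.
-/

open scoped BigOperators

/-! ### Finite-time probabilities of the walk -/

/-- `RelatesInSteps r n a b` says that `b` is reached from `a` by `n` successive `r`-steps. It
expresses paths of the random walk, sequences of cluster moves and paths of a Markov chain. -/
inductive RelatesInSteps {α : Type*} (r : α → α → Prop) : ℕ → α → α → Prop
  | refl (a : α) : RelatesInSteps r 0 a a
  | head {n : ℕ} {a b c : α} (hab : r a b) (hbc : RelatesInSteps r n b c) :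
      RelatesInSteps r (n + 1) a c

namespace RelatesInSteps

variable {α : Type*} {r r' : α → α → Prop} {m n : ℕ} {a b c : α}

theorem single (h : r a b) : RelatesInSteps r 1 a b := head h (refl b)

theorem trans (hab : RelatesInSteps r m a b) (hbc : RelatesInSteps r n b c) :
    RelatesInSteps r (m + n) a c := by
  induction hab with
  | refl => simpa using hbc
  | head h _ ih => exact Nat.succ_add_eq_add_succ _ n ▸ head h (ih hbc)

theorem mono (hr : ∀ a b, r a b → r' a b) (h : RelatesInSteps r n a b) :
    RelatesInSteps r' n a b := by
  induction h with
  | refl => exact refl _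
  | head h _ ih => exact head (hr _ _ h) ih

end RelatesInSteps

section Steps

variable {d : ℕ}

/-- The unit steps of the walk, indexed by a coordinate and a sign. -/
def stepVec (p : Fin d × ℤˣ) : Pt d := Pi.single p.1 (p.2 : ℤ)

theorem stepVec_injective : Function.Injective (stepVec (d := d)) := by
  rintro ⟨i, a⟩ ⟨j, b⟩ h
  have h_coord := congrFun h i
  obtain rfl : i = j := by
    by_contra hij
    simp [stepVec, Pi.single_eq_of_ne hij] at h_coord
  simpa [stepVec, Units.ext_iff] using h_coord

theorem range_stepVec : Set.range (stepVec (d := d)) = Dir d := by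
  ext s
  constructor
  · rintro ⟨⟨i, u⟩, rfl⟩
    rcases Int.units_eq_one_or u with rfl | rfl
    exacts [⟨i, .inl rfl⟩, ⟨i, .inr rfl⟩]
  · rintro ⟨i, rfl | rfl⟩
    exacts [⟨(i, 1), rfl⟩, ⟨(i, -1), rfl⟩]

theorem stepVec_mem_Dir (p : Fin d × ℤˣ) : stepVec p ∈ Dir d := range_stepVec ▸ ⟨p, rfl⟩

theorem expect_stepVec (g : Pt d → ℝ) :
    𝔼 p : Fin d × ℤˣ, g (stepVec p) =
      (∑ i, (g (Pi.single i 1) + g (Pi.single i (-1)))) / (2 * d) := by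
  simp [Finset.expect_eq_sum_div_card, Fintype.sum_prod_type, UnitsInt.univ, stepVec, mul_comm]

theorem div_le_expect {g : Fin d × ℤˣ → ℝ} (hg : ∀ p, 0 ≤ g p) (p : Fin d × ℤˣ) :
    g p / (2 * d) ≤ 𝔼 p, g p := by
  simp only [Finset.expect_eq_sum_div_card, Finset.card_univ, Fintype.card_prod, Fintype.card_fin,
    Fintype.card_units_int, Nat.cast_mul, Nat.cast_ofNat, mul_comm (d : ℝ)]
  gcongr
  exact Finset.single_le_sum (fun q _ => hg q) (Finset.mem_univ p)

open Classical in
theorem prob_eq_expect (T : ℕ) (P : (Fin T → Pt d) → Prop) :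
    prob d T P = 𝔼 σ : Fin T → Fin d × ℤˣ, if P (stepVec ∘ σ) then (1 : ℝ) else 0 := by
  have h_card : Nat.card {s : Fin T → Pt d // (∀ i, s i ∈ Dir d) ∧ P s} =
      Nat.card {σ : Fin T → Fin d × ℤˣ // P (stepVec ∘ σ)} := by
    refine (Nat.card_congr (Equiv.ofBijective
      (fun σ => ⟨stepVec ∘ σ.1, fun i => stepVec_mem_Dir _, σ.2⟩) ⟨?_, ?_⟩)).symm
    · exact fun σ τ h => Subtype.ext (stepVec_injective.comp_left (congrArg Subtype.val h))
    · rintro ⟨s, hs, hP⟩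
      choose σ hσ using fun i => range_stepVec.ge (hs i)
      obtain rfl : stepVec ∘ σ = s := funext hσ
      exact ⟨⟨σ, hP⟩, rfl⟩
  rw [prob, h_card, Nat.card_eq_fintype_card, Fintype.card_subtype, Finset.expect_eq_sum_div_card,
    Finset.sum_boole]
  simp [mul_comm]

theorem prob_nonneg (T : ℕ) (P : (Fin T → Pt d) → Prop) : 0 ≤ prob d T P := by
  unfold prob; positivity

theorem prob_eq_zero {T : ℕ} {P : (Fin T → Pt d) → Prop} (h : ∀ s, ¬ P s) : prob d T P = 0 := by
  simp [prob, h]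

theorem prob_zero {P : (Fin 0 → Pt d) → Prop} (h : P Fin.elim0) : prob d 0 P = 1 := by
  classical
  have h_univ (s : Fin 0 → Pt d) : P s := Subsingleton.elim Fin.elim0 s ▸ h
  simp [prob_eq_expect, h_univ]

theorem prob_mono {T : ℕ} {P Q : (Fin T → Pt d) → Prop}
    (h : ∀ s, (∀ i, s i ∈ Dir d) → P s → Q s) : prob d T P ≤ prob d T Q := by
  classical
  simp only [prob_eq_expect]
  refine Finset.expect_le_expect fun σ _ => ?_
  have h_imp := h (stepVec ∘ σ) fun _ => stepVec_mem_Dir _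
  grind

theorem prob_le_sum {T : ℕ} {ι : Type*} (F : Finset ι) {P : (Fin T → Pt d) → Prop}
    {Q : ι → (Fin T → Pt d) → Prop} (h : ∀ s, (∀ i, s i ∈ Dir d) → P s → ∃ y ∈ F, Q y s) :
    prob d T P ≤ ∑ y ∈ F, prob d T (Q y) := by
  classical
  simp only [prob_eq_expect]
  rw [← Finset.expect_sum_comm]
  refine Finset.expect_le_expect fun σ _ => ?_
  split_ifs with hP
  · obtain ⟨y, hy, hQ⟩ := h _ (fun _ => stepVec_mem_Dir _) hP
    calc (1 : ℝ) = if Q y (stepVec ∘ σ) then 1 else 0 := (if_pos hQ).symm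
      _ ≤ _ := Finset.single_le_sum (f := fun z => if Q z (stepVec ∘ σ) then (1 : ℝ) else 0)
        (fun z _ => by positivity) hy
  · positivity

theorem prob_add_le {T : ℕ} {P Q R : (Fin T → Pt d) → Prop}
    (hP : ∀ s, P s → R s) (hQ : ∀ s, Q s → R s) (hPQ : ∀ s, P s → ¬ Q s) :
    prob d T P + prob d T Q ≤ prob d T R := by
  classical
  simp only [prob_eq_expect]
  rw [← Finset.expect_add_distrib]
  refine Finset.expect_le_expect fun σ _ => ?_
  grind

theorem prob_succ_eq_expect_cons (T : ℕ) (P : (Fin (T + 1) → Pt d) → Prop) :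
    prob d (T + 1) P = 𝔼 p, prob d T (fun s => P (Fin.cons (stepVec p) s)) := by
  classical
  simp only [prob_eq_expect]
  rw [← Fintype.expect_equiv (Fin.consEquiv fun _ => Fin d × ℤˣ) _ _ fun _ => rfl,
    ← Finset.univ_product_univ, Finset.expect_product]
  simp [Fin.consEquiv, Fin.comp_cons]

theorem prob_succ_eq_expect_snoc (T : ℕ) (P : (Fin (T + 1) → Pt d) → Prop) :
    prob d (T + 1) P = 𝔼 p, prob d T (fun s => P (Fin.snoc s (stepVec p))) := by
  classical
  simp only [prob_eq_expect]
  rw [← Fintype.expect_equiv (Fin.snocEquiv fun _ => Fin d × ℤˣ) _ _ fun _ => rfl,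
    ← Finset.univ_product_univ, Finset.expect_product]
  simp [Fin.snocEquiv, Fin.comp_snoc]

theorem prob_succ_init [NeZero d] (T : ℕ) (P : (Fin T → Pt d) → Prop) :
    prob d (T + 1) (fun s => P (Fin.init s)) = prob d T P := by
  simp [prob_succ_eq_expect_snoc, Fin.init_snoc]

theorem prob_div_le_prob_succ (T : ℕ) (P : (Fin T → Pt d) → Prop) {g : Pt d} (hg : g ∈ Dir d) :
    prob d T P / (2 * d) ≤ prob d (T + 1) (fun s => P (Fin.init s) ∧ s (Fin.last T) = g) := by
  obtain ⟨p, rfl⟩ := range_stepVec.ge hg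
  rw [prob_succ_eq_expect_snoc]
  exact le_of_eq_of_le (by simp [Fin.init_snoc]) (div_le_expect (fun q => prob_nonneg _ _) p)

theorem wpos_zero (x : Pt d) {T : ℕ} (s : Fin T → Pt d) : wpos d x s 0 = x := by
  simp [wpos]

theorem wpos_cons (x e : Pt d) {T : ℕ} (s : Fin T → Pt d) (u : ℕ) :
    wpos d x (Fin.cons e s : Fin (T + 1) → Pt d) (u + 1) = wpos d (x + e) s u := by
  simp [wpos, Finset.sum_filter, Fin.sum_univ_succ, add_assoc]

theorem wpos_init (x : Pt d) {T u : ℕ} (s : Fin (T + 1) → Pt d) (hu : u ≤ T) :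
    wpos d x (Fin.init s) u = wpos d x s u := by
  simp [wpos, Finset.sum_filter, Fin.sum_univ_castSucc, hu.not_gt, Fin.init]

theorem wpos_last (x : Pt d) {T : ℕ} (s : Fin (T + 1) → Pt d) :
    wpos d x s (T + 1) = wpos d x s T + s (Fin.last T) := by
  simp [wpos, Finset.sum_filter, Fin.sum_univ_castSucc, add_assoc, Fin.is_lt]

end Steps

/-! ### Survival and superharmonic functions -/

section Survival

variable {d : ℕ}

/-- `P_x(τ_A > T)`, the probability that a walk from `x` avoids `A` at the times `1, …, T`. -/
noncomputable def survivalProb (A : Set (Pt d)) (x : Pt d) (T : ℕ) : ℝ :=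
  prob d T fun s => ∀ t, 1 ≤ t → t ≤ T → wpos d x s t ∉ A

/-- `P_x(τ_W = t)`, the terms of the series `retProb`. -/
noncomputable def returnProbAt (W : Set (Pt d)) (x : Pt d) (t : ℕ) : ℝ :=
  prob d t fun s => 1 ≤ t ∧ wpos d x s t ∈ W ∧ ∀ u, 1 ≤ u → u < t → wpos d x s u ∉ W

theorem survivalProb_nonneg (A : Set (Pt d)) (x : Pt d) (T : ℕ) : 0 ≤ survivalProb A x T :=
  prob_nonneg _ _

theorem survivalProb_zero (A : Set (Pt d)) (x : Pt d) : survivalProb A x 0 = 1 :=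
  prob_zero fun _ h1 h0 => absurd (h1.trans h0) one_pos.not_ge

open Classical in
theorem survivalProb_succ (A : Set (Pt d)) (x : Pt d) (T : ℕ) :
    survivalProb A x (T + 1) =
      𝔼 p, if x + stepVec p ∈ A then 0 else survivalProb A (x + stepVec p) T := by
  rw [survivalProb, prob_succ_eq_expect_cons]
  refine Finset.expect_congr rfl fun p _ => ?_
  split_ifs with hp
  · exact prob_eq_zero fun s h => h 1 le_rfl (by lia) (by rwa [wpos_cons, wpos_zero])
  · refine congrArg (prob d T) (funext fun s => propext ⟨fun h u _ huT => ?_,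
      fun h u hu huT => ?_⟩)
    · exact wpos_cons x _ s u ▸ h (u + 1) (by lia) (by lia)
    · obtain ⟨_ | u, rfl⟩ := Nat.exists_eq_add_of_le' hu
      · rwa [wpos_cons, wpos_zero]
      · exact wpos_cons x _ s (u + 1) ▸ h (u + 1) (by lia) (by lia)

theorem survivalProb_succ_add_returnProbAt_le [NeZero d] (A : Set (Pt d)) (x : Pt d) (T : ℕ) :
    survivalProb A x (T + 1) + returnProbAt A x (T + 1) ≤ survivalProb A x T := by
  refine (prob_add_le (fun s h u hu huT => ?_) (fun s h u hu huT => ?_)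
    fun s h h' => h (T + 1) (by lia) le_rfl h'.2.1).trans_eq (prob_succ_init T _)
  · exact wpos_init x s huT ▸ h u hu (by lia)
  · exact wpos_init x s huT ▸ h.2.2 u hu (by lia)

theorem survivalProb_antitone [NeZero d] (A : Set (Pt d)) (x : Pt d) :
    Antitone (survivalProb A x) :=
  antitone_nat_of_succ_le fun T =>
    (le_add_of_nonneg_right (prob_nonneg _ _)).trans (survivalProb_succ_add_returnProbAt_le A x T)

/-- One step of the walk to a point outside `A`. -/
def AvoidStep (A : Set (Pt d)) (x y : Pt d) : Prop := y - x ∈ Dir d ∧ y ∉ A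

theorem AvoidStep.exists_stepVec {A : Set (Pt d)} {x y : Pt d} (h : AvoidStep A x y) :
    ∃ p, x + stepVec p = y := by
  obtain ⟨p, hp⟩ := range_stepVec.ge h.1
  exact ⟨p, by simp [hp]⟩

theorem pow_mul_survivalProb_le {A : Set (Pt d)} {x z : Pt d} {L : ℕ}
    (h : RelatesInSteps (AvoidStep A) L x z) (T : ℕ) :
    (1 / (2 * d) : ℝ) ^ L * survivalProb A z T ≤ survivalProb A x (T + L) := by
  classical
  induction h with
  | refl => simp
  | @head L x y z hxy _ ih =>
    obtain ⟨p, rfl⟩ := hxy.exists_stepVec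
    calc (1 / (2 * d) : ℝ) ^ (L + 1) * survivalProb A z T
        = (1 / (2 * d) : ℝ) ^ L * survivalProb A z T / (2 * d) := by ring
      _ ≤ survivalProb A (x + stepVec p) (T + L) / (2 * d) := by gcongr
      _ ≤ survivalProb A x (T + L + 1) := by
        rw [survivalProb_succ]
        refine le_trans (by simp [hxy.2]) (div_le_expect (fun q => ?_) p)
        split_ifs
        exacts [le_rfl, survivalProb_nonneg _ _ _]

/-- Superharmonicity for simple random walk: the mean of `h` over the neighbours of a point is
at most its value there. -/
def IsSuperharmonic (h : Pt d → ℝ) : Prop := ∀ x, 𝔼 p, h (x + stepVec p) ≤ h x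

theorem IsSuperharmonic.sum_sub {h : Pt d → ℝ} (hh : IsSuperharmonic h) (A : Finset (Pt d)) :
    IsSuperharmonic fun x => ∑ a ∈ A, h (x - a) := fun x => by
  rw [Finset.expect_sum_comm]
  exact Finset.sum_le_sum fun a _ => by simpa [add_sub_right_comm] using hh (x - a)

theorem IsSuperharmonic.one_sub_le_survivalProb [NeZero d] {h : Pt d → ℝ} (hh : IsSuperharmonic h)
    (h0 : ∀ x, 0 ≤ h x) {A : Set (Pt d)} (hA : ∀ a ∈ A, 1 ≤ h a) (x : Pt d) (T : ℕ) :
    1 - h x ≤ survivalProb A x T := by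
  classical
  induction T generalizing x with
  | zero => simpa [survivalProb_zero] using h0 x
  | succ T ih =>
    calc 1 - h x ≤ 𝔼 p, (1 - h (x + stepVec p)) := by
          rw [Finset.expect_sub_distrib, Fintype.expect_const]
          linarith [hh x]
      _ ≤ survivalProb A x (T + 1) := by
          rw [survivalProb_succ]
          refine Finset.expect_le_expect fun p _ => ?_
          split_ifs with hp
          exacts [sub_nonpos.2 (hA _ hp), ih _]

theorem esc_of_mem {A : Set (Pt d)} {x : Pt d} (hx : x ∈ A) :
    esc d A x = ⨅ T, survivalProb A x T := if_pos hx

theorem esc_nonneg (A : Set (Pt d)) (x : Pt d) : 0 ≤ esc d A x := by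
  rw [esc]
  split_ifs
  exacts [Real.iInf_nonneg fun T => prob_nonneg _ _, le_rfl]

theorem esc_le_one (A : Set (Pt d)) (x : Pt d) : esc d A x ≤ 1 := by
  by_cases hx : x ∈ A
  · rw [esc_of_mem hx, ← survivalProb_zero A x]
    exact ciInf_le ⟨0, Set.forall_mem_range.2 (survivalProb_nonneg A x)⟩ 0
  · simp [esc, hx]

theorem capa_coe (A : Finset (Pt d)) : capa d (A : Set (Pt d)) = ∑ a ∈ A, esc d A a :=
  Finset.tsum_subtype' A _

end Survival

/-! ### A uniform lower bound for escape probabilities -/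

section Transience

variable {d : ℕ}

/-- The right side is the cubic Taylor polynomial plus a quartic term dominating the remainder. -/
theorem sqrt_one_div_one_add_le {t : ℝ} (ht : |t| ≤ 1 / 2) :
    √(1 / (1 + t)) ≤ 1 - t / 2 + 3 / 8 * t ^ 2 - 5 / 16 * t ^ 3 + 9 / 16 * t ^ 4 := by
  obtain ⟨h1, h2⟩ := abs_le.1 ht
  rw [Real.sqrt_le_iff, div_le_iff₀ (by linarith)]
  constructor
  · nlinarith [mul_nonneg (sq_nonneg t) (by linarith : 0 ≤ 1 - t), sq_nonneg (t ^ 2)]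
  · have h_cofactor : 0 ≤ 37 / 64 + 25 / 32 * t - 71 / 256 * t ^ 2 + 43 / 256 * t ^ 3 -
        9 / 256 * t ^ 4 + 81 / 256 * t ^ 5 := by
      nlinarith [sq_nonneg t, sq_nonneg (t ^ 2), sq_nonneg (t * (t ^ 2 - 1)),
        sq_nonneg (t + 1 / 2), sq_nonneg (t * (t + 1 / 2))]
    linarith [mul_nonneg (sq_nonneg (t ^ 2)) h_cofactor]

theorem one_add_half_le_sqrt {s : ℝ} (h0 : 0 ≤ s) (h1 : s < 1) :
    1 + s / 2 ≤ √(1 / (1 - s)) := by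
  refine Real.le_sqrt_of_sq_le ?_
  rw [le_div_iff₀ (by linarith)]
  nlinarith [pow_nonneg h0 2, pow_nonneg h0 3]

/-- The squared Euclidean norm. -/
def normSq (x : Pt d) : ℝ := ∑ i, (x i : ℝ) ^ 2

theorem normSq_nonneg (x : Pt d) : 0 ≤ normSq x := Finset.sum_nonneg fun _ _ => sq_nonneg _

theorem normSq_add_single (x : Pt d) (i : Fin d) (c : ℤ) :
    normSq (x + Pi.single i c) = normSq x + 2 * c * x i + c ^ 2 := by
  have h_coord (j : Fin d) : ((x + Pi.single i c : Pt d) j : ℝ) ^ 2 =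
      (x j : ℝ) ^ 2 + if j = i then 2 * (c : ℝ) * x i + (c : ℝ) ^ 2 else 0 := by
    rcases eq_or_ne j i with rfl | hj
    · simp only [Pi.add_apply, Pi.single_eq_same, Int.cast_add, if_true]
      ring
    · simp [hj]
  simp_rw [normSq, h_coord, Finset.sum_add_distrib]
  simp [add_assoc]

theorem sq_le_normSq (x : Pt d) (i : Fin d) : (x i : ℝ) ^ 2 ≤ normSq x :=
  Finset.single_le_sum (f := fun j => (x j : ℝ) ^ 2) (fun _ _ => sq_nonneg _) (Finset.mem_univ i)

/-- A positive superharmonic function, used to bound hitting probabilities of finite sets. It decays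
like `|x|⁻¹`, which is the decay of the Green's function in dimension three; the additive constant
makes the Taylor estimates valid at every lattice point, and the factor normalises `potential 0`. -/
noncomputable def potential (x : Pt d) : ℝ := √(5 / (normSq x + 5))

theorem potential_zero : potential (0 : Pt d) = 1 := by simp [potential, normSq]

theorem potential_add_single_le (x : Pt d) (i : Fin d) {c : ℤ} (hc : c ^ 2 = 1) {y t : ℝ}
    (hy : y = normSq x + 6) (ht : t = 2 * c * x i / y) :
    potential (x + Pi.single i c) ≤
      √(5 / y) * (1 - t / 2 + 3 / 8 * t ^ 2 - 5 / 16 * t ^ 3 + 9 / 16 * t ^ 4) := by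
  have h_y : 0 < y := by linarith [normSq_nonneg x]
  have h_c : (c : ℝ) ^ 2 = 1 := mod_cast hc
  have h_t : |t| ≤ 1 / 2 := by
    have h_sq : 16 * (x i : ℝ) ^ 2 ≤ y ^ 2 := by
      rw [hy]
      nlinarith [sq_le_normSq x i, sq_nonneg (normSq x - 2)]
    refine abs_le_of_sq_le_sq ?_ (by norm_num)
    rw [ht, div_pow, div_le_iff₀ (by positivity), mul_pow, mul_pow, h_c]
    linarith
  calc potential (x + Pi.single i c) = √(5 / y * (1 / (1 + t))) := by
        rw [potential, normSq_add_single, h_c, ht]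
        congr 1
        field_simp
        rw [hy]
        ring
    _ = √(5 / y) * √(1 / (1 + t)) := Real.sqrt_mul (by positivity) _
    _ ≤ _ := by gcongr; exact sqrt_one_div_one_add_le h_t

theorem potential_add_single_add_le (x : Pt d) (i : Fin d) {y : ℝ} (hy : y = normSq x + 6) :
    potential (x + Pi.single i 1) + potential (x + Pi.single i (-1)) ≤
      √(5 / y) * (2 + (3 / y ^ 2 + 18 / y ^ 3) * (x i : ℝ) ^ 2) := by
  have h_y : 0 < y := by linarith [normSq_nonneg x]
  have h_sq : (x i : ℝ) ^ 2 ≤ y := by linarith [sq_le_normSq x i]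
  have h_pos := potential_add_single_le x i (c := 1) (by norm_num) hy rfl
  have h_neg := potential_add_single_le x i (c := -1) (by norm_num) hy rfl
  calc potential (x + Pi.single i 1) + potential (x + Pi.single i (-1))
      ≤ √(5 / y) * (2 + 3 / y ^ 2 * (x i : ℝ) ^ 2 + 18 / y ^ 4 * (x i : ℝ) ^ 2 * (x i : ℝ) ^ 2) :=
        (add_le_add h_pos h_neg).trans_eq (by push_cast; ring)
    _ ≤ √(5 / y) * (2 + 3 / y ^ 2 * (x i : ℝ) ^ 2 + 18 / y ^ 4 * (x i : ℝ) ^ 2 * y) := by gcongr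
    _ = √(5 / y) * (2 + (3 / y ^ 2 + 18 / y ^ 3) * (x i : ℝ) ^ 2) := by field_simp; ring

theorem sqrt_mul_le_potential (x : Pt d) {y : ℝ} (hy : y = normSq x + 6) :
    √(5 / y) * (1 + 1 / y / 2) ≤ potential x := by
  have h_N := normSq_nonneg x
  have h_y : 0 < y := by linarith
  have h_eq : 1 - 1 / y = (normSq x + 5) / y := by rw [hy]; field_simp; ring
  calc √(5 / y) * (1 + 1 / y / 2) ≤ √(5 / y) * √(1 / (1 - 1 / y)) := by
        gcongr
        refine one_add_half_le_sqrt (by positivity) ?_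
        rw [div_lt_one] <;> linarith
    _ = potential x := by
        rw [← Real.sqrt_mul (by positivity), potential, h_eq]
        field_simp

theorem isSuperharmonic_potential (hd : 3 ≤ d) : IsSuperharmonic (potential (d := d)) := by
  intro x
  obtain ⟨y, hy⟩ : ∃ y, y = normSq x + 6 := ⟨_, rfl⟩
  have h_N : normSq x = y - 6 := by linarith
  have h_y : 0 < y := by linarith [normSq_nonneg x]
  have h_d : (3 : ℝ) ≤ d := mod_cast hd
  rw [expect_stepVec fun e => potential (x + e), div_le_iff₀ (by positivity)]
  calc ∑ i, (potential (x + Pi.single i 1) + potential (x + Pi.single i (-1)))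
      ≤ ∑ i, √(5 / y) * (2 + (3 / y ^ 2 + 18 / y ^ 3) * (x i : ℝ) ^ 2) :=
        Finset.sum_le_sum fun i _ => potential_add_single_add_le x i hy
    _ = √(5 / y) * (2 * d + (3 / y ^ 2 + 18 / y ^ 3) * (y - 6)) := by
        rw [← Finset.mul_sum, Finset.sum_add_distrib, ← Finset.mul_sum, ← normSq, h_N]
        simp [mul_comm]
    _ ≤ √(5 / y) * (2 * d + 3 / y) := by
        gcongr
        field_simp
        linarith
    _ ≤ √(5 / y) * ((1 + 1 / y / 2) * (2 * d)) := by
        gcongr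
        field_simp
        linarith
    _ ≤ potential x * (2 * d) := by
        rw [← mul_assoc]
        gcongr
        exact sqrt_mul_le_potential x hy

theorem exists_coord_two_mul_sq_le {A : Finset (Pt d)} {x : Pt d} (hx : x ∈ A) (hA : A.card ≤ d) :
    ∃ i, ∀ a ∈ A, 2 * ((x - a) i : ℝ) ^ 2 ≤ normSq (x - a) := by
  classical
  by_contra! h
  choose a ha h_lt using h
  have h_inj : Function.Injective a := by
    intro i j hij
    by_contra h_ne
    have h_two : ((x - a i) i : ℝ) ^ 2 + ((x - a i) j : ℝ) ^ 2 ≤ normSq (x - a i) := by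
      rw [← Finset.sum_pair (f := fun k => ((x - a i) k : ℝ) ^ 2) h_ne]
      exact Finset.sum_le_sum_of_subset_of_nonneg (Finset.subset_univ _) fun _ _ _ => sq_nonneg _
    have h_i := h_lt i
    have h_j := h_lt j
    rw [← hij] at h_j
    linarith
  have h_maps (i : Fin d) : a i ∈ A.erase x := by
    refine Finset.mem_erase.2 ⟨fun h_eq => ?_, ha i⟩
    simpa [h_eq, normSq] using h_lt i
  have h_card := Finset.card_le_card_of_injOn (s := .univ) a (fun i _ => h_maps i) h_inj.injOn
  rw [Finset.card_univ, Fintype.card_fin, Finset.card_erase_of_mem hx] at h_card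
  have := Finset.card_pos.2 ⟨x, hx⟩
  lia

theorem sq_div_two_le_normSq_add_single {v : Pt d} {i : Fin d}
    (hv : 2 * (v i : ℝ) ^ 2 ≤ normSq v) (r : ℤ) :
    (r : ℝ) ^ 2 / 2 ≤ normSq (v + Pi.single i r) := by
  rw [normSq_add_single]
  nlinarith [sq_nonneg (2 * (v i : ℝ) + r)]

theorem relatesInSteps_avoidStep_line {A : Set (Pt d)} {x : Pt d} {i : Fin d}
    (h : ∀ r : ℕ, 1 ≤ r → x + Pi.single i (r : ℤ) ∉ A) (L : ℕ) :
    RelatesInSteps (AvoidStep A) L x (x + Pi.single i (L : ℤ)) := by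
  induction L with
  | zero => simpa using RelatesInSteps.refl x
  | succ L ih =>
    refine ih.trans (.single ⟨⟨i, .inl ?_⟩, h _ (by lia)⟩)
    simp [Pi.single_add]

theorem half_le_survivalProb_of_far (hd : 3 ≤ d) {A : Finset (Pt d)} (hA : A.card ≤ d) {z : Pt d}
    (hz : ∀ a ∈ A, (7 * d : ℝ) ^ 2 / 2 ≤ normSq (z - a)) (T : ℕ) :
    1 / 2 ≤ survivalProb (A : Set (Pt d)) z T := by
  have : NeZero d := ⟨by lia⟩
  have h_d : (0 : ℝ) < d := mod_cast Nat.pos_of_neZero d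
  have h_term : ∀ a ∈ A, potential (z - a) ≤ 1 / (2 * d) := fun a ha => by
    have h_far := hz a ha
    rw [potential, Real.sqrt_le_left (by positivity), div_le_iff₀ (by nlinarith)]
    field_simp
    nlinarith
  have h_sum : ∑ a ∈ A, potential (z - a) ≤ 1 / 2 :=
    calc ∑ a ∈ A, potential (z - a) ≤ A.card • (1 / (2 * d) : ℝ) :=
          Finset.sum_le_card_nsmul _ _ _ h_term
      _ ≤ d • (1 / (2 * d) : ℝ) := by gcongr
      _ = 1 / 2 := by rw [nsmul_eq_mul]; field_simp
  refine le_trans (by linarith) (((isSuperharmonic_potential hd).sum_sub A).one_sub_le_survivalProb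
    (fun x => Finset.sum_nonneg fun _ _ => Real.sqrt_nonneg _) (fun a ha => ?_) z T)
  calc 1 = potential (a - a) := by rw [sub_self, potential_zero]
    _ ≤ _ := Finset.single_le_sum (f := fun b => potential (a - b))
      (fun _ _ => Real.sqrt_nonneg _) ha

/-- A lower bound for the escape probability from any point of a set of at most `d` points: walk
`7 * d` steps straight away from the set, and then never return. -/
noncomputable def escBound (d : ℕ) : ℝ := (1 / (2 * d) : ℝ) ^ (7 * d) / 2

theorem escBound_pos [NeZero d] : 0 < escBound d := by
  have h_d : (0 : ℝ) < d := mod_cast Nat.pos_of_neZero d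
  exact half_pos (pow_pos (one_div_pos.2 (mul_pos two_pos h_d)) _)

theorem escBound_le_esc (hd : 3 ≤ d) {A : Finset (Pt d)} (hA : A.card ≤ d) {x : Pt d} (hx : x ∈ A) :
    escBound d ≤ esc d A x := by
  have : NeZero d := ⟨by lia⟩
  obtain ⟨i, hi⟩ := exists_coord_two_mul_sq_le hx hA
  have h_far (r : ℤ) (a : Pt d) (ha : a ∈ A) : (r : ℝ) ^ 2 / 2 ≤ normSq (x + Pi.single i r - a) :=
    add_sub_right_comm x _ a ▸ sq_div_two_le_normSq_add_single (hi a ha) r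
  have h_avoid (r : ℕ) (hr : 1 ≤ r) : x + Pi.single i (r : ℤ) ∉ (A : Set (Pt d)) := fun h => by
    have h_r : (1 : ℝ) ≤ r := mod_cast hr
    have h_le : (r : ℝ) ^ 2 / 2 ≤ 0 := by simpa [normSq] using h_far r _ h
    nlinarith
  have h_path := relatesInSteps_avoidStep_line h_avoid (7 * d)
  rw [esc_of_mem (Finset.mem_coe.2 hx)]
  refine le_ciInf fun T => ?_
  have h_half : 1 / 2 ≤ survivalProb A (x + Pi.single i ((7 * d : ℕ) : ℤ)) T :=
    half_le_survivalProb_of_far hd hA (fun a ha => by simpa using h_far (7 * d : ℕ) a ha) T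
  calc escBound d = (1 / (2 * d) : ℝ) ^ (7 * d) * (1 / 2) := by rw [escBound]; ring
    _ ≤ (1 / (2 * d) : ℝ) ^ (7 * d) *
          survivalProb A (x + Pi.single i ((7 * d : ℕ) : ℤ)) T := by gcongr
    _ ≤ survivalProb A x (T + 7 * d) := pow_mul_survivalProb_le h_path T
    _ ≤ survivalProb A x T := survivalProb_antitone _ _ (by lia)

end Transience

/-! ### Hitting probabilities -/

section Hitting

variable {d : ℕ} {W : Set (Pt d)} {x y z : Pt d}

/-- `P_x(S_t = y, τ_W > t)`, the transition probabilities of the walk killed on `W`. -/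
noncomputable def killedProb (W : Set (Pt d)) (x y : Pt d) (t : ℕ) : ℝ :=
  prob d t fun s => wpos d x s t = y ∧ ∀ u, 1 ≤ u → u ≤ t → wpos d x s u ∉ W

/-- `P_x(τ_W = t, S_{t − 1} = y)`, the terms of the series `hitFrom`. -/
noncomputable def hitFromProbAt (W : Set (Pt d)) (x y : Pt d) (t : ℕ) : ℝ :=
  prob d t fun s => 1 ≤ t ∧ wpos d x s t ∈ W ∧ wpos d x s (t - 1) = y ∧
    ∀ u, 1 ≤ u → u < t → wpos d x s u ∉ W

theorem killedProb_zero_self (W : Set (Pt d)) (x : Pt d) : killedProb W x x 0 = 1 :=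
  prob_zero ⟨wpos_zero x _, fun _ h1 h0 => absurd (h1.trans h0) one_pos.not_ge⟩

theorem killedProb_div_le_succ (x : Pt d) (t : ℕ) (h : AvoidStep W y z) :
    killedProb W x y t / (2 * d) ≤ killedProb W x z (t + 1) := by
  refine (prob_div_le_prob_succ t _ h.1).trans (prob_mono ?_)
  rintro s - ⟨⟨h_pos, h_avoid⟩, h_last⟩
  rw [wpos_init x s le_rfl] at h_pos
  have h_end : wpos d x s (t + 1) = z := by rw [wpos_last, h_pos, h_last, add_sub_cancel]
  refine ⟨h_end, fun u hu hut => ?_⟩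
  rcases hut.eq_or_lt with rfl | hut
  · exact h_end ▸ h.2
  · exact wpos_init x s (Nat.le_of_lt_succ hut) ▸ h_avoid u hu (Nat.le_of_lt_succ hut)

theorem pow_mul_killedProb_le {L : ℕ} (h : RelatesInSteps (AvoidStep W) L y z) (x : Pt d)
    (t : ℕ) : (1 / (2 * d) : ℝ) ^ L * killedProb W x y t ≤ killedProb W x z (t + L) := by
  induction h generalizing t with
  | refl => simp
  | @head L y y' z hy _ ih =>
    calc (1 / (2 * d) : ℝ) ^ (L + 1) * killedProb W x y t
        = (1 / (2 * d) : ℝ) ^ L * (killedProb W x y t / (2 * d)) := by ring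
      _ ≤ (1 / (2 * d) : ℝ) ^ L * killedProb W x y' (t + 1) := by
        gcongr
        exact killedProb_div_le_succ x t hy
      _ ≤ killedProb W x z (t + (L + 1)) := by
        rw [add_comm L 1, ← add_assoc]
        exact ih (t + 1)

theorem killedProb_div_le_hitFromProbAt (x : Pt d) (t : ℕ) (hz : z ∈ W) (hyz : z - y ∈ Dir d) :
    killedProb W x y t / (2 * d) ≤ hitFromProbAt W x y (t + 1) := by
  refine (prob_div_le_prob_succ t _ hyz).trans (prob_mono ?_)
  rintro s - ⟨⟨h_pos, h_avoid⟩, h_last⟩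
  rw [wpos_init x s le_rfl] at h_pos
  refine ⟨by lia, ?_, h_pos, fun u hu hut => ?_⟩
  · rwa [wpos_last, h_pos, h_last, add_sub_cancel]
  · exact wpos_init x s (Nat.le_of_lt_succ hut) ▸ h_avoid u hu (Nat.le_of_lt_succ hut)

theorem hitFromProbAt_succ_le_killedProb [NeZero d] (W : Set (Pt d)) (x y : Pt d) (t : ℕ) :
    hitFromProbAt W x y (t + 1) ≤ killedProb W x y t := by
  refine (prob_mono ?_).trans_eq (prob_succ_init t _)
  rintro s - ⟨-, -, h_pos, h_avoid⟩
  refine ⟨wpos_init x s le_rfl ▸ h_pos, fun u hu hut => ?_⟩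
  exact wpos_init x s hut ▸ h_avoid u hu (by lia)

theorem hitFromProbAt_zero (W : Set (Pt d)) (x y : Pt d) : hitFromProbAt W x y 0 = 0 :=
  prob_eq_zero fun _ h => absurd h.1 (by lia)

theorem hitFromProbAt_le_returnProbAt (W : Set (Pt d)) (x y : Pt d) (t : ℕ) :
    hitFromProbAt W x y t ≤ returnProbAt W x t :=
  prob_mono fun _ _ h => ⟨h.1, h.2.1, h.2.2.2⟩

theorem sum_returnProbAt_add_survivalProb_le_one [NeZero d] (W : Set (Pt d)) (x : Pt d) (T : ℕ) :
    ∑ t ∈ Finset.range (T + 1), returnProbAt W x t + survivalProb W x T ≤ 1 := by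
  induction T with
  | zero =>
    have h_zero : returnProbAt W x 0 = 0 := prob_eq_zero fun _ h => absurd h.1 (by lia)
    simp [survivalProb_zero, h_zero]
  | succ T ih =>
    rw [Finset.sum_range_succ]
    linarith [survivalProb_succ_add_returnProbAt_le W x T]

theorem summable_returnProbAt [NeZero d] (W : Set (Pt d)) (x : Pt d) :
    Summable (returnProbAt W x) := by
  refine summable_of_sum_range_le (c := 1) (fun _ => prob_nonneg _ _) fun T => ?_
  have h_le := sum_returnProbAt_add_survivalProb_le_one W x T
  rw [Finset.sum_range_succ] at h_le
  have h_nonneg : 0 ≤ returnProbAt W x T := prob_nonneg _ _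
  linarith [survivalProb_nonneg W x T]

theorem summable_hitFromProbAt [NeZero d] (W : Set (Pt d)) (x y : Pt d) :
    Summable (hitFromProbAt W x y) :=
  (summable_returnProbAt W x).of_nonneg_of_le (fun _ => prob_nonneg _ _)
    (hitFromProbAt_le_returnProbAt W x y)

theorem hitFrom_nonneg (W : Set (Pt d)) (x y : Pt d) : 0 ≤ hitFrom d W x y :=
  tsum_nonneg fun _ => prob_nonneg _ _

theorem transP_nonneg (W : Set (Pt d)) (x y : Pt d) : 0 ≤ transP d W x y :=
  div_nonneg (hitFrom_nonneg W x y) (tsum_nonneg fun _ => prob_nonneg _ _)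

theorem pow_mul_hitFrom_le [NeZero d] {w : Pt d} {L : ℕ}
    (h : RelatesInSteps (AvoidStep W) L y z) (hw : w ∈ W) (hzw : w - z ∈ Dir d) (x : Pt d) :
    (1 / (2 * d) : ℝ) ^ (L + 1) * hitFrom d W x y ≤ hitFrom d W x z := by
  have h_term (t : ℕ) :
      (1 / (2 * d) : ℝ) ^ (L + 1) * hitFromProbAt W x y t ≤ hitFromProbAt W x z (t + L) := by
    rcases t with _ | t
    · have h_nonneg : 0 ≤ hitFromProbAt W x z (0 + L) := prob_nonneg _ _
      simpa [hitFromProbAt_zero] using h_nonneg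
    calc (1 / (2 * d) : ℝ) ^ (L + 1) * hitFromProbAt W x y (t + 1)
        ≤ (1 / (2 * d) : ℝ) ^ (L + 1) * killedProb W x y t := by
          gcongr
          exact hitFromProbAt_succ_le_killedProb W x y t
      _ = (1 / (2 * d) : ℝ) ^ L * killedProb W x y t / (2 * d) := by ring
      _ ≤ killedProb W x z (t + L) / (2 * d) := by
          gcongr
          exact pow_mul_killedProb_le h x t
      _ ≤ hitFromProbAt W x z (t + 1 + L) := by
          rw [add_right_comm]
          exact killedProb_div_le_hitFromProbAt x _ hw hzw
  have h_inj := add_left_injective L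
  calc (1 / (2 * d) : ℝ) ^ (L + 1) * hitFrom d W x y
      = ∑' t, (1 / (2 * d) : ℝ) ^ (L + 1) * hitFromProbAt W x y t := tsum_mul_left.symm
    _ ≤ ∑' t, hitFromProbAt W x z (t + L) :=
        ((summable_hitFromProbAt W x y).mul_left _).tsum_le_tsum h_term
          ((summable_hitFromProbAt W x z).comp_injective h_inj)
    _ ≤ hitFrom d W x z := tsum_comp_le_tsum_of_inj (summable_hitFromProbAt W x z)
        (fun _ => prob_nonneg _ _) h_inj

theorem closure_Dir : AddSubmonoid.closure (Dir d) = ⊤ := by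
  refine top_unique fun v _ => ?_
  have h_single (i : Fin d) (n : ℤ) : (Pi.single i n : Pt d) ∈ AddSubmonoid.closure (Dir d) := by
    have h_pos : (Pi.single i 1 : Pt d) ∈ Dir d := ⟨i, .inl rfl⟩
    have h_neg : (Pi.single i (-1) : Pt d) ∈ Dir d := ⟨i, .inr rfl⟩
    obtain ⟨k, rfl | rfl⟩ := n.eq_nat_or_neg
    · simpa [← Pi.single_smul] using nsmul_mem (AddSubmonoid.subset_closure h_pos) k
    · simpa [← Pi.single_smul] using nsmul_mem (AddSubmonoid.subset_closure h_neg) k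
  rw [← Finset.univ_sum_single v]
  exact sum_mem fun i _ => h_single i _

theorem reflTransGen_sub_mem_Dir (x y : Pt d) :
    Relation.ReflTransGen (fun a b => b - a ∈ Dir d) x y := by
  obtain ⟨v, rfl⟩ : ∃ v, y = x + v := ⟨y - x, (add_sub_cancel x y).symm⟩
  have h_mem : v ∈ AddSubmonoid.closure (Dir d) := closure_Dir ▸ AddSubmonoid.mem_top v
  induction h_mem using AddSubmonoid.closure_induction_right with
  | zero => simpa using .refl
  | add_right v _ g hg ih => exact ih.tail (by simpa [← add_assoc] using hg)

theorem exists_relatesInSteps_avoidStep (hx : x ∉ W) (hW : W.Nonempty) :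
    ∃ y L, RelatesInSteps (AvoidStep W) L x y ∧ ∃ w ∈ W, w - y ∈ Dir d := by
  obtain ⟨w, hw⟩ := hW
  induction reflTransGen_sub_mem_Dir x w using Relation.ReflTransGen.head_induction_on with
  | refl => exact absurd hw hx
  | @head x x' h_step _ ih =>
    by_cases hx' : x' ∈ W
    · exact ⟨x, 0, .refl x, x', hx', h_step⟩
    · obtain ⟨y, L, h_path, h_exit⟩ := ih hx'
      exact ⟨y, L + 1, .head ⟨h_step, hx'⟩ h_path, h_exit⟩

theorem retProb_pos [NeZero d] (hx : x ∉ W) (hW : W.Nonempty) : 0 < retProb d W x := by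
  obtain ⟨y, L, h_path, w, hw, hyw⟩ := exists_relatesInSteps_avoidStep hx hW
  have h_d : (0 : ℝ) < d := mod_cast Nat.pos_of_neZero d
  calc (0 : ℝ) < (1 / (2 * d) : ℝ) ^ L * killedProb W x x 0 / (2 * d) := by
        rw [killedProb_zero_self]
        positivity
    _ ≤ killedProb W x y (0 + L) / (2 * d) := by
        gcongr
        exact pow_mul_killedProb_le h_path x 0
    _ ≤ hitFromProbAt W x y (0 + L + 1) := killedProb_div_le_hitFromProbAt x _ hw hyw
    _ ≤ returnProbAt W x (0 + L + 1) := hitFromProbAt_le_returnProbAt W x y _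
    _ ≤ retProb d W x := (summable_returnProbAt W x).le_tsum _ fun _ _ => prob_nonneg _ _

theorem hitFrom_eq_zero (hx : x ∉ W) (hy : y ∈ W) : hitFrom d W x y = 0 := by
  refine (tsum_congr fun t => prob_eq_zero fun s h => ?_).trans tsum_zero
  obtain ⟨ht, -, h_pos, h_avoid⟩ := h
  obtain ⟨_ | t, rfl⟩ := Nat.exists_eq_add_of_le' ht
  · exact hx (by rwa [← h_pos, wpos_zero] at hy)
  · exact h_avoid (t + 1) (by lia) (by lia) (h_pos ▸ hy)

theorem retProb_le_sum_hitFrom [NeZero d] (W : Finset (Pt d)) (x : Pt d) :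
    retProb d W x ≤ ∑ q ∈ W ×ˢ Finset.univ, hitFrom d W x (q.1 - stepVec q.2) := by
  have h_term (t : ℕ) : returnProbAt (W : Set (Pt d)) x t ≤
      ∑ q ∈ W ×ˢ Finset.univ, hitFromProbAt W x (q.1 - stepVec q.2) t := by
    refine prob_le_sum _ ?_
    rintro s hs ⟨ht, h_mem, h_avoid⟩
    obtain ⟨t, rfl⟩ := Nat.exists_eq_add_of_le' ht
    obtain ⟨p, hp⟩ := range_stepVec.ge (hs (Fin.last t))
    refine ⟨(wpos d x s (t + 1), p), by simpa using h_mem, ht, h_mem, ?_, h_avoid⟩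
    rw [hp, wpos_last, add_sub_cancel_right, Nat.add_sub_cancel]
  have h_summable (q : Pt d × Fin d × ℤˣ) :=
    summable_hitFromProbAt (W : Set (Pt d)) x (q.1 - stepVec q.2)
  calc retProb d W x ≤ ∑' t, ∑ q ∈ W ×ˢ Finset.univ, hitFromProbAt W x (q.1 - stepVec q.2) t :=
        (summable_returnProbAt _ x).tsum_le_tsum h_term (summable_sum fun q _ => h_summable q)
    _ = _ := Summable.tsum_finsetSum fun q _ => h_summable q

theorem exists_retProb_div_le_hitFrom [NeZero d] {W : Finset (Pt d)} (hW : W.Nonempty)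
    (hx : x ∉ W) : ∃ w ∈ W, ∃ y ∉ W,
      w - y ∈ Dir d ∧ retProb d W x / (2 * d * W.card) ≤ hitFrom d W x y := by
  have h_d : (0 : ℝ) < d := mod_cast Nat.pos_of_neZero d
  have h_card : (0 : ℝ) < W.card := mod_cast hW.card_pos
  have h_pos : 0 < retProb d W x / (2 * d * W.card) :=
    div_pos (retProb_pos (Finset.mem_coe.not.2 hx) hW) (mul_pos (by positivity) h_card)
  have h_sum : ∑ _q ∈ W ×ˢ (Finset.univ : Finset (Fin d × ℤˣ)), retProb d W x / (2 * d * W.card) ≤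
      ∑ q ∈ W ×ˢ Finset.univ, hitFrom d W x (q.1 - stepVec q.2) := by
    refine le_of_eq_of_le ?_ (retProb_le_sum_hitFrom W x)
    rw [Finset.sum_const, Finset.card_product, nsmul_eq_mul]
    simp only [Finset.card_univ, Fintype.card_prod, Fintype.card_fin, Fintype.card_units_int,
      Nat.cast_mul, Nat.cast_ofNat]
    field_simp
  obtain ⟨⟨w, p⟩, h_mem, h_le⟩ :=
    Finset.exists_le_of_sum_le (hW.product Finset.univ_nonempty) h_sum
  refine ⟨w, (Finset.mem_product.1 h_mem).1, w - stepVec p, fun h => ?_, ?_, h_le⟩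
  · have h_zero : hitFrom d W x (w - stepVec p) = 0 :=
      hitFrom_eq_zero (Finset.mem_coe.not.2 hx) (Finset.mem_coe.2 h)
    exact h_pos.not_ge (h_le.trans_eq h_zero)
  · rw [sub_sub_cancel]
    exact stepVec_mem_Dir p

end Hitting

/-! ### Moving a cluster to a reference shape -/

section ClusterMoves

variable {d : ℕ} {W A : Finset (Pt d)} {u v w x y : Pt d}

theorem neg_mem_Dir (hu : u ∈ Dir d) : -u ∈ Dir d := by
  obtain ⟨i, rfl | rfl⟩ := hu
  · exact ⟨i, .inr (Pi.single_neg i 1).symm⟩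
  · exact ⟨i, .inl (by rw [← Pi.single_neg, neg_neg])⟩

theorem add_self_notMem_Dir (u : Pt d) : u + u ∉ Dir d := by
  rintro ⟨i, h | h⟩ <;> have h_coord := congrFun h i <;>
    simp only [Pi.add_apply, Pi.single_eq_same] at h_coord <;> lia

theorem ne_zero_of_mem_Dir (hu : u ∈ Dir d) : u ≠ 0 := fun h =>
  add_self_notMem_Dir 0 (by simpa [h] using hu)

theorem e1v_mem_Dir [NeZero d] : e1v d ∈ Dir d :=
  ⟨0, .inl (funext fun j => by simp only [e1v, Pi.single_apply, Fin.ext_iff, Fin.val_zero])⟩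

theorem exists_parallel_notMem (hW : W.card ≤ 2) (hw : w ∈ W) (hwy : w - y ∈ Dir d)
    (hu : u ∈ Dir d) (h_add : y ≠ w + u) (h_sub : y ≠ w - u) :
    ∃ v, (v = u ∨ v = -u) ∧ y + v ∉ W ∧ w + v ∉ W := by
  have h_double : u + u ≠ 0 := fun h =>
    ne_zero_of_mem_Dir hu (self_eq_neg.1 (eq_neg_of_add_eq_zero_left h))
  -- Besides `w`, there is room in `W` for one point, which cannot block both signs.
  by_contra! h
  have h_blocked (v : Pt d) (hv : v = u ∨ v = -u) : ∃ a ∈ W, a = y + v ∨ a = w + v := by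
    by_cases hyv : y + v ∈ W
    exacts [⟨_, hyv, .inl rfl⟩, ⟨_, h v hv hyv, .inr rfl⟩]
  obtain ⟨a, ha, ha_eq⟩ := h_blocked u (.inl rfl)
  obtain ⟨b, hb, hb_eq⟩ := h_blocked (-u) (.inr rfl)
  have h_far : w - y ≠ u + u := fun h => add_self_notMem_Dir u (h ▸ hwy)
  have h_far' : w - y ≠ -u + -u := fun h => add_self_notMem_Dir (-u) (h ▸ hwy)
  have hwa : w ≠ a := by grind [ne_zero_of_mem_Dir hu]
  have hwb : w ≠ b := by grind [ne_zero_of_mem_Dir hu]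
  have hab : a ≠ b := by grind
  exact hW.not_gt (Finset.two_lt_card.2 ⟨w, hw, a, ha, b, hb, hwa, hwb, hab⟩)

theorem exists_relatesInSteps_avoidStep_axis (hW : W.card ≤ 2) (hw : w ∈ W) (hy : y ∉ W)
    (hwy : w - y ∈ Dir d) (hu : u ∈ Dir d) :
    ∃ z ∉ W, (z = w + u ∨ z = w - u) ∧
      ∃ L ≤ 2, RelatesInSteps (AvoidStep (W : Set (Pt d))) L y z := by
  by_cases h_axis : y = w + u ∨ y = w - u
  · exact ⟨y, hy, h_axis, 0, by lia, .refl y⟩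
  rw [not_or] at h_axis
  obtain ⟨v, hv, hyv, hwv⟩ := exists_parallel_notMem hW hw hwy hu h_axis.1 h_axis.2
  have hv_Dir : v ∈ Dir d := by
    rcases hv with rfl | rfl
    exacts [hu, neg_mem_Dir hu]
  refine ⟨w + v, hwv, ?_, 2, le_rfl, ?_⟩
  · rcases hv with rfl | rfl
    exacts [.inl rfl, .inr (sub_eq_add_neg w u).symm]
  · have h_side : AvoidStep (W : Set (Pt d)) y (y + v) :=
      ⟨by rwa [add_sub_cancel_left], hyv⟩
    have h_over : AvoidStep (W : Set (Pt d)) (y + v) (w + v) :=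
      ⟨by rwa [add_sub_add_right_eq_sub], hwv⟩
    exact .head h_side (.single h_over)

/-- A lower bound for the probability of transporting to a prescribed axis through the remaining
one or two points of a cluster. -/
noncomputable def transBound (d : ℕ) : ℝ := (1 / (2 * d) : ℝ) ^ 3 / (4 * d)

theorem transBound_pos [NeZero d] : 0 < transBound d := by
  have h_d : (0 : ℝ) < d := mod_cast Nat.pos_of_neZero d
  exact div_pos (pow_pos (one_div_pos.2 (mul_pos two_pos h_d)) 3) (mul_pos four_pos h_d)

theorem exists_transBound_le_transP [NeZero d] (hW : W.Nonempty) (hW2 : W.card ≤ 2) (hx : x ∉ W)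
    (hu : u ∈ Dir d) :
    ∃ w ∈ W, ∃ y ∉ W, (y = w + u ∨ y = w - u) ∧ transBound d ≤ transP d W x y := by
  obtain ⟨w, hw, y, hy, hwy, h_hit⟩ := exists_retProb_div_le_hitFrom hW hx
  obtain ⟨z, hz, h_axis, L, hL, h_path⟩ :=
    exists_relatesInSteps_avoidStep_axis hW2 hw hy hwy hu
  have hwz : w - z ∈ Dir d := by
    rcases h_axis with rfl | rfl
    · simpa using neg_mem_Dir hu
    · simpa using hu
  have h_d : (1 : ℝ) ≤ d := mod_cast Nat.pos_of_neZero d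
  have h_card : (0 : ℝ) < W.card := mod_cast hW.card_pos
  have h_card2 : (W.card : ℝ) ≤ 2 := mod_cast hW2
  have h_ret : 0 < retProb d (W : Set (Pt d)) x := retProb_pos (Finset.mem_coe.not.2 hx) hW
  have h_mono : retProb d W x / (2 * d * 2) ≤ retProb d W x / (2 * d * W.card) :=
    div_le_div_of_nonneg_left h_ret.le (mul_pos (by positivity) h_card) (by gcongr)
  refine ⟨w, hw, z, hz, h_axis, (le_div_iff₀ h_ret).2 ?_⟩
  calc transBound d * retProb d W x
      = (1 / (2 * d) : ℝ) ^ (2 + 1) * (retProb d W x / (2 * d * 2)) := by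
        rw [transBound]; ring
    _ ≤ (1 / (2 * d) : ℝ) ^ (L + 1) * (retProb d W x / (2 * d * W.card)) := by
        gcongr ?_ * ?_
        exact pow_le_pow_of_le_one (by positivity)
          (div_le_one_of_le₀ (by linarith) (by positivity)) (by lia)
    _ ≤ (1 / (2 * d) : ℝ) ^ (L + 1) * hitFrom d W x y := by gcongr
    _ ≤ hitFrom d W x z := pow_mul_hitFrom_le h_path (Finset.mem_coe.2 hw) hwz x

/-- `ClusterMove A B`: the cluster `A` can become `B` by activating one of its points and
transporting it with conditional probability at least `transBound d`. -/
def ClusterMove (A B : Finset (Pt d)) : Prop :=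
  ∃ x ∈ A, ∃ y ∉ A.erase x, B = insert y (A.erase x) ∧
    transBound d ≤ transP d ((A : Set (Pt d)) \ {x}) x y

theorem card_insert_erase (hx : x ∈ A) (hy : y ∉ A.erase x) :
    (insert y (A.erase x)).card = A.card := by
  rw [Finset.card_insert_of_notMem hy, Finset.card_erase_add_one hx]

theorem exists_clusterMove_insert_erase [NeZero d] (hA : A.card = 2 ∨ A.card = 3) (hx : x ∈ A) :
    ∃ w ∈ A.erase x, ∃ y ∉ A.erase x, (y = w + e1v d ∨ y = w - e1v d) ∧
      ClusterMove A (insert y (A.erase x)) := by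
  have h_card := Finset.card_erase_add_one hx
  obtain ⟨w, hw, y, hy, h_axis, h_le⟩ := exists_transBound_le_transP
    (Finset.card_pos.1 (by lia : 0 < (A.erase x).card)) (by lia) (Finset.notMem_erase x A)
    e1v_mem_Dir
  exact ⟨w, hw, y, hy, h_axis, x, hx, y, hy, rfl, by rwa [← Finset.coe_erase]⟩

theorem exists_clusterMove_mem_Ref [NeZero d] (hA : A.card = 2) : ∃ B ∈ Ref d, ClusterMove A B := by
  obtain ⟨x, hx⟩ := Finset.card_pos.1 (by lia : 0 < A.card)
  obtain ⟨w, hw, y, -, h_axis, h_move⟩ := exists_clusterMove_insert_erase (.inl hA) hx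
  obtain ⟨w', h_erase⟩ := Finset.card_eq_one.1
    (by have := Finset.card_erase_add_one hx; lia : (A.erase x).card = 1)
  obtain rfl : w = w' := Finset.mem_singleton.1 (h_erase ▸ hw)
  refine ⟨_, ?_, h_move⟩
  rw [h_erase]
  rcases h_axis with rfl | rfl
  · exact ⟨w, .inl (Finset.pair_comm _ _)⟩
  · exact ⟨w - e1v d, .inl (by rw [sub_add_cancel])⟩

theorem exists_clusterMove_pair [NeZero d] (hA : A.card = 3) :
    ∃ B v z, z ∈ B ∧ B.card = 3 ∧ B.erase z = {v, v + e1v d} ∧ ClusterMove A B := by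
  obtain ⟨x, hx⟩ := Finset.card_pos.1 (by lia : 0 < A.card)
  obtain ⟨w, hw, y, hy, h_axis, h_move⟩ := exists_clusterMove_insert_erase (.inr hA) hx
  obtain ⟨z, hz⟩ := Finset.card_eq_one.1 (by
    have := Finset.card_erase_add_one hx
    have := Finset.card_erase_add_one hw
    lia : ((A.erase x).erase w).card = 1)
  have h_erase : A.erase x = {w, z} := hz ▸ (Finset.insert_erase hw).symm
  have hwz : w ≠ z := fun h => Finset.notMem_erase w (A.erase x) (by
    rw [hz, h, Finset.mem_singleton])
  have hB : (insert y (A.erase x)).erase z = {w, y} := by grind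
  have h_mem : z ∈ insert y (A.erase x) := by simp [h_erase]
  have h_card : (insert y (A.erase x)).card = 3 := (card_insert_erase hx hy).trans hA
  rcases h_axis with rfl | rfl
  · exact ⟨_, w, z, h_mem, h_card, hB, h_move⟩
  · refine ⟨_, w - e1v d, z, h_mem, h_card, ?_, h_move⟩
    rw [hB, sub_add_cancel, Finset.pair_comm]

theorem exists_clusterMove_clusterMove_mem_Ref [NeZero d] (hA : A.card = 3) :
    ∃ B, ClusterMove A B ∧ ∃ C ∈ Ref d, ClusterMove B C := by
  obtain ⟨B, v, z, hz, hB, h_erase, h_move⟩ := exists_clusterMove_pair hA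
  obtain ⟨w, hw, y, hy, h_axis, h_move'⟩ := exists_clusterMove_insert_erase (.inr hB) hz
  refine ⟨B, h_move, _, ?_, h_move'⟩
  rw [h_erase] at hw hy ⊢
  simp only [Finset.mem_insert, Finset.mem_singleton, not_or] at hw hy
  rcases hw with rfl | rfl <;> rcases h_axis with rfl | rfl
  · exact absurd rfl hy.2
  · exact ⟨w - e1v d, .inr (by simp)⟩
  · exact ⟨v, .inr (by rw [Finset.insert_comm, Finset.pair_comm _ (v + e1v d)])⟩
  · exact absurd (add_sub_cancel_right _ _) hy.1

theorem exists_relatesInSteps_clusterMove_mem_Ref [NeZero d] (hA : A.card = 2 ∨ A.card = 3) :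
    ∃ B ∈ Ref d, ∃ m, 1 ≤ m ∧ m ≤ 2 ∧ RelatesInSteps ClusterMove m A B := by
  rcases hA with hA | hA
  · obtain ⟨B, hB, h⟩ := exists_clusterMove_mem_Ref hA
    exact ⟨B, hB, 1, by lia, by lia, .single h⟩
  · obtain ⟨B, h, C, hC, h'⟩ := exists_clusterMove_clusterMove_mem_Ref hA
    exact ⟨C, hC, 2, by lia, by lia, .head h (.single h')⟩

end ClusterMoves

/-! ### Transition probabilities of IHAT -/

section Transitions

variable {d k n : ℕ} {D E : ClusteringS d} {C : Fin k → Finset (Pt d)} {A B : Finset (Pt d)}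

theorem mem_confOf {i : Fin D.1} {x : Pt d} (hx : x ∈ D.2 i) : x ∈ confOf d D :=
  Finset.mem_biUnion.2 ⟨i, Finset.mem_univ i, hx⟩

theorem mem_confOf_updC (D : ClusteringS d) (i : Fin D.1) (x y : Pt d) :
    y ∈ confOf d (updC d D i x y) :=
  mem_confOf (D := updC d D i x y) (i := i) (by simp [updC])

open Classical in
theorem ihatProb_eq_sum (D E : ClusteringS d) :
    ihatProb d D E = ∑ x ∈ confOf d D, ∑ y ∈ confOf d E, ∑ i : Fin D.1,
      if x ∈ D.2 i ∧ E = updC d D i x y then qIHAT d D i x y else 0 := by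
  have h_y (x y : Pt d) (hy : y ∉ confOf d E) : ∑ i : Fin D.1,
      (if x ∈ D.2 i ∧ E = updC d D i x y then qIHAT d D i x y else 0) = 0 :=
    Finset.sum_eq_zero fun i _ => if_neg fun ⟨_, h⟩ => hy (h ▸ mem_confOf_updC D i x y)
  have h_x (x : Pt d) (hx : x ∉ confOf d D) : ∑' y, ∑ i : Fin D.1,
      (if x ∈ D.2 i ∧ E = updC d D i x y then qIHAT d D i x y else 0) = 0 := by
    have h_notMem (i : Fin D.1) : x ∉ D.2 i := fun h => hx (mem_confOf h)
    simp [h_notMem]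
  rw [ihatProb, tsum_eq_sum fun x hx => h_x x hx]
  exact Finset.sum_congr rfl fun x _ => tsum_eq_sum fun y hy => h_y x y hy

theorem capa_nonneg (A : Set (Pt d)) : 0 ≤ capa d A := tsum_nonneg fun _ => esc_nonneg A _

theorem qIHAT_nonneg (D : ClusteringS d) (i : Fin D.1) (x y : Pt d) : 0 ≤ qIHAT d D i x y :=
  mul_nonneg (div_nonneg (esc_nonneg _ x) (Finset.sum_nonneg fun _ _ => capa_nonneg _))
    (transP_nonneg _ x y)

theorem qIHAT_le_ihatProb {i : Fin D.1} {x : Pt d} (hx : x ∈ D.2 i) (y : Pt d) :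
    qIHAT d D i x y ≤ ihatProb d D (updC d D i x y) := by
  classical
  have h_nonneg (x' y' : Pt d) (j : Fin D.1) :
      0 ≤ if x' ∈ D.2 j ∧ updC d D i x y = updC d D j x' y' then qIHAT d D j x' y' else 0 :=
    ite_nonneg (qIHAT_nonneg D j x' y') le_rfl
  rw [ihatProb_eq_sum]
  refine le_trans ?_ (Finset.single_le_sum (fun x' _ => Finset.sum_nonneg fun y' _ =>
    Finset.sum_nonneg fun j _ => h_nonneg x' y' j) (mem_confOf hx))
  refine le_trans ?_ (Finset.single_le_sum (fun y' _ =>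
    Finset.sum_nonneg fun j _ => h_nonneg x y' j) (mem_confOf_updC D i x y))
  refine le_trans ?_ (Finset.single_le_sum (fun j _ => h_nonneg x y j) (Finset.mem_univ i))
  exact (if_pos ⟨hx, rfl⟩).ge

theorem exists_eq_updC_of_ihatProb_ne_zero (h : ihatProb d D E ≠ 0) :
    ∃ i, ∃ x ∈ D.2 i, ∃ y ∉ (D.2 i).erase x, E = updC d D i x y := by
  classical
  rw [ihatProb_eq_sum] at h
  obtain ⟨x, -, hx⟩ := Finset.exists_ne_zero_of_sum_ne_zero h
  obtain ⟨y, -, hy⟩ := Finset.exists_ne_zero_of_sum_ne_zero hx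
  obtain ⟨i, -, hi⟩ := Finset.exists_ne_zero_of_sum_ne_zero hy
  obtain ⟨⟨h_mem, h_upd⟩, h_q⟩ := ite_ne_right_iff.1 hi
  refine ⟨i, x, h_mem, y, fun hy => h_q ?_, h_upd⟩
  have h_hit : hitFrom d ((D.2 i : Set (Pt d)) \ {x}) x y = 0 :=
    hitFrom_eq_zero (by simp) (by simpa [and_comm] using hy)
  rw [qIHAT, transP, h_hit, zero_div, mul_zero]

/-- Families of clusters of two or three points, the state space of the chain. -/
def IsDimerTrimer (C : Fin k → Finset (Pt d)) : Prop := ∀ i, (C i).card = 2 ∨ (C i).card = 3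

theorem IsDimerTrimer.update (hC : IsDimerTrimer C) (i : Fin k) (hA : A.card = 2 ∨ A.card = 3) :
    IsDimerTrimer (Function.update C i A) :=
  (Function.forall_update_iff C fun _ B => B.card = 2 ∨ B.card = 3).2 ⟨hA, fun j _ => hC j⟩

theorem isDimerTrimer_of_ihatProb_ne_zero (h : ihatProb d D E ≠ 0) (hD : IsDimerTrimer D.2) :
    E.1 = D.1 ∧ IsDimerTrimer E.2 := by
  obtain ⟨i, x, hx, y, hy, rfl⟩ := exists_eq_updC_of_ihatProb_ne_zero h
  exact ⟨rfl, hD.update i (by rw [card_insert_erase hx hy]; exact hD i)⟩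

theorem capS_le (D : ClusteringS d) {m : ℕ} (hD : ∀ i, (D.2 i).card ≤ m) :
    capS d D ≤ m * D.1 := by
  have h_cluster (i : Fin D.1) : capa d (D.2 i : Set (Pt d)) ≤ m := by
    rw [capa_coe]
    calc ∑ a ∈ D.2 i, esc d (D.2 i) a ≤ ∑ _a ∈ D.2 i, (1 : ℝ) :=
          Finset.sum_le_sum fun a _ => esc_le_one _ a
      _ ≤ m := by simpa using hD i
  calc capS d D ≤ ∑ _i : Fin D.1, (m : ℝ) := Finset.sum_le_sum fun i _ => h_cluster i
    _ = m * D.1 := by simp [mul_comm]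

theorem esc_le_capS (D : ClusteringS d) {i : Fin D.1} {x : Pt d} (hx : x ∈ D.2 i) :
    esc d (D.2 i) x ≤ capS d D :=
  calc esc d (D.2 i) x ≤ capa d (D.2 i : Set (Pt d)) := by
        rw [capa_coe]
        exact Finset.single_le_sum (fun a _ => esc_nonneg _ a) hx
    _ ≤ capS d D := Finset.single_le_sum (f := fun j => capa d (D.2 j : Set (Pt d)))
        (fun _ _ => capa_nonneg _) (Finset.mem_univ i)

/-- A lower bound for the probability that IHAT performs a prescribed `ClusterMove`, when there
are at most `n` clusters. -/
noncomputable def moveBound (d n : ℕ) : ℝ := escBound d / (3 * n) * transBound d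

theorem moveBound_pos [NeZero d] [NeZero n] : 0 < moveBound d n := by
  have h_n : (0 : ℝ) < n := mod_cast Nat.pos_of_neZero n
  exact mul_pos (div_pos escBound_pos (mul_pos three_pos h_n)) transBound_pos

theorem moveBound_le_ihatProb (hd : 3 ≤ d) (hk : k ≤ n) (hC : IsDimerTrimer C) {i : Fin k}
    (h : ClusterMove (C i) B) : moveBound d n ≤ ihatProb d ⟨k, C⟩ ⟨k, Function.update C i B⟩ := by
  obtain ⟨x, hx, y, -, rfl, h_trans⟩ := h
  refine le_trans ?_ (qIHAT_le_ihatProb (D := ⟨k, C⟩) hx y)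
  have : NeZero d := ⟨by lia⟩
  have h_esc : escBound d ≤ esc d (C i) x := escBound_le_esc hd (by grind [hC i]) hx
  have h_cap : capS d ⟨k, C⟩ ≤ 3 * n := by
    refine (capS_le ⟨k, C⟩ fun j => by grind [hC j] : capS d ⟨k, C⟩ ≤ (3 : ℕ) * (k : ℕ)).trans ?_
    push_cast
    gcongr
  have h_cap_pos : 0 < capS d ⟨k, C⟩ :=
    escBound_pos.trans_le (h_esc.trans (esc_le_capS ⟨k, C⟩ (i := i) hx))
  exact mul_le_mul (div_le_div₀ (esc_nonneg _ x) h_esc h_cap_pos h_cap) h_trans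
    transBound_pos.le (div_nonneg (esc_nonneg _ x) h_cap_pos.le)

theorem ClusterMove.card_eq (h : ClusterMove A B) : B.card = A.card := by
  obtain ⟨x, hx, y, hy, rfl, -⟩ := h
  exact card_insert_erase hx hy

theorem relatesInSteps_update (hd : 3 ≤ d) (hk : k ≤ n) (hC : IsDimerTrimer C) (i : Fin k)
    (hA : A.card = 2 ∨ A.card = 3) {m : ℕ} (h : RelatesInSteps ClusterMove m A B) :
    (B.card = 2 ∨ B.card = 3) ∧
      RelatesInSteps (fun D E => moveBound d n ≤ ihatProb d D E) m
        ⟨k, Function.update C i A⟩ ⟨k, Function.update C i B⟩ := by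
  induction h with
  | refl => exact ⟨hA, .refl _⟩
  | @head m A A' B h_move _ ih =>
    obtain ⟨hB, h_path⟩ := ih (h_move.card_eq ▸ hA)
    refine ⟨hB, .head ?_ h_path⟩
    have h_step := moveBound_le_ihatProb hd hk (hC.update i hA) (i := i) (B := A')
      (by rwa [Function.update_self])
    rwa [Function.update_idem] at h_step

theorem exists_relatesInSteps_forall_mem_Ref (hd : 3 ≤ d) (hk : k ≤ n) (hC : IsDimerTrimer C)
    (S : Finset (Fin k)) :
    ∃ C' : Fin k → Finset (Pt d), (∀ l ∈ S, C' l ∈ Ref d) ∧ (∀ l ∉ S, C' l = C l) ∧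
      ∃ m, S.card ≤ m ∧ m ≤ 2 * S.card ∧
        RelatesInSteps (fun D E => moveBound d n ≤ ihatProb d D E) m ⟨k, C⟩ ⟨k, C'⟩ := by
  have : NeZero d := ⟨by lia⟩
  induction S using Finset.induction_on generalizing C with
  | empty => exact ⟨C, by simp, fun _ _ => rfl, 0, by simp, by simp, .refl _⟩
  | insert i S hi ih =>
    obtain ⟨B, hB, m₁, h₁, h₁', h_cluster⟩ := exists_relatesInSteps_clusterMove_mem_Ref (hC i)
    obtain ⟨h_card, h_first⟩ := relatesInSteps_update hd hk hC i (hC i) h_cluster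
    rw [Function.update_eq_self] at h_first
    obtain ⟨C', h_mem, h_fix, m₂, h₂, h₂', h_rest⟩ := ih (hC.update i h_card)
    have h_at : C' i = B := by rw [h_fix i hi, Function.update_self]
    refine ⟨C', ?_, fun l hl => ?_, m₁ + m₂, ?_, ?_, h_first.trans h_rest⟩
    · exact Finset.forall_mem_insert .. |>.2 ⟨h_at ▸ hB, h_mem⟩
    · rw [Finset.mem_insert, not_or] at hl
      rw [h_fix l hl.2, Function.update_of_ne hl.1]
    all_goals rw [Finset.card_insert_of_notMem hi]; lia

theorem exists_relatesInSteps_ihatProb_mem_Ref (hd : 3 ≤ d) (h₀ : 0 < D.1) (hn : D.1 ≤ n)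
    (hD : IsDimerTrimer D.2) :
    ∃ E : ClusteringS d, (E.1 = D.1 ∧ ∀ l, E.2 l ∈ Ref d) ∧ ∃ m, 1 ≤ m ∧ m ≤ 2 * n ∧
      RelatesInSteps (fun D E => moveBound d n ≤ ihatProb d D E) m D E := by
  obtain ⟨C, h_Ref, -, m, hm, hm', h_path⟩ :=
    exists_relatesInSteps_forall_mem_Ref hd hn hD Finset.univ
  rw [Finset.card_univ, Fintype.card_fin] at hm hm'
  exact ⟨⟨D.1, C⟩, ⟨rfl, fun l => h_Ref l (Finset.mem_univ l)⟩, m, by lia, by lia, h_path⟩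

theorem IsClusteringConf.card_le (hD : IsClusteringConf d n D) : D.1 ≤ n := by
  obtain ⟨h_nonempty, h_disj, rfl⟩ := hD
  rw [confOf, Finset.card_biUnion fun i _ j _ => h_disj i j]
  simpa using Finset.card_nsmul_le_sum Finset.univ (fun i => (D.2 i).card) 1
    fun i _ => (h_nonempty i).card_pos

end Transitions

/-! ### Return times of Markov chains -/

section MarkovChain

/-- The event that a trajectory agrees with `u` up to time `t`. -/
def pathCylinder {α : Type*} (t : ℕ) (u : ℕ → α) : Set (ℕ → α) := {ω | ∀ s ≤ t, ω s = u s}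

theorem pathCylinder_succ_subset {α : Type*} (t : ℕ) (u : ℕ → α) :
    pathCylinder (t + 1) u ⊆ pathCylinder t u := fun _ h s hs => h s (by lia)

theorem pathCylinder_congr {α : Type*} {t : ℕ} {u v : ℕ → α} (h : ∀ s ≤ t, u s = v s) :
    pathCylinder t u = pathCylinder t v :=
  Set.ext fun _ => forall₂_congr fun s hs => by rw [h s hs]

variable {α : Type*} [MeasurableSpace α] {Q : α → α → ENNReal} {x₀ : α} {μ : Measure (ℕ → α)}
  {G R : Set α} {p : ENNReal}

theorem measure_le_mul_of_pathCylinder [Countable α] [MeasurableSingletonClass α] (t : ℕ)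
    {B B' : Set (ℕ → α)} (h_sub : B' ⊆ B) (hB : ∀ u ∈ B, pathCylinder t u ⊆ B) {r : ENNReal}
    (h : ∀ u ∈ B, μ (pathCylinder t u ∩ B') ≤ r * μ (pathCylinder t u)) : μ B' ≤ r * μ B := by
  let f : (ℕ → α) → Fin (t + 1) → α := fun ω s => ω s
  have h_fiber (u : ℕ → α) : f ⁻¹' {f u} = pathCylinder t u := by
    ext ω
    simp [f, pathCylinder, funext_iff, Fin.forall_iff]
  have hf : Measurable f := by fun_prop
  have h_preimage : f ⁻¹' (f '' B) = B := by
    refine (Set.subset_preimage_image f B).antisymm' ?_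
    rintro ω ⟨u, hu, h_eq⟩
    exact hB u hu (h_fiber u ▸ h_eq.symm)
  calc μ B' ≤ μ (⋃ w : f '' B, f ⁻¹' {w.1} ∩ B') :=
        measure_mono fun ω hω => Set.mem_iUnion.2 ⟨⟨f ω, ω, h_sub hω, rfl⟩, rfl, hω⟩
    _ ≤ ∑' w : f '' B, μ (f ⁻¹' {w.1} ∩ B') := measure_iUnion_le _
    _ ≤ ∑' w : f '' B, r * μ (f ⁻¹' {w.1}) := ENNReal.tsum_le_tsum fun ⟨w, u, hu, hw⟩ => by
        subst hw
        simpa only [h_fiber] using h u hu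
    _ = r * μ B := by
        rw [ENNReal.tsum_mul_left, tsum_measure_preimage_singleton (Set.to_countable _)
          fun w _ => hf (measurableSet_singleton w), h_preimage]

open Classical in
/-- `μ` is the law of the Markov chain with transition probabilities `Q` started from `x₀`. The
transition matrix `Q` is not required to be stochastic. -/
def IsMarkovLaw (Q : α → α → ENNReal) (x₀ : α) (μ : Measure (ℕ → α)) : Prop :=
  IsProbabilityMeasure μ ∧ ∀ (t : ℕ) (u : ℕ → α), μ (pathCylinder t u) =
    (if u 0 = x₀ then 1 else 0) * ∏ s ∈ Finset.range t, Q (u s) (u (s + 1))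

namespace IsMarkovLaw

theorem measure_pathCylinder_succ (h : IsMarkovLaw Q x₀ μ) (t : ℕ) (u : ℕ → α) :
    μ (pathCylinder (t + 1) u) = μ (pathCylinder t u) * Q (u t) (u (t + 1)) := by
  simp only [h.2, Finset.prod_range_succ, mul_assoc]

theorem mem_of_measure_pathCylinder_ne_zero (h : IsMarkovLaw Q x₀ μ) (h₀ : x₀ ∈ G)
    (hG : ∀ x ∈ G, ∀ y, Q x y ≠ 0 → y ∈ G) {t : ℕ} {u : ℕ → α} (hu : μ (pathCylinder t u) ≠ 0) :
    u t ∈ G := by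
  induction t with
  | zero =>
    have h_start : u 0 = x₀ := by
      by_contra h_ne
      exact hu ((h.2 0 u).trans (by simp [h_ne]))
    rwa [h_start]
  | succ t ih =>
    rw [h.measure_pathCylinder_succ, mul_ne_zero_iff] at hu
    exact hG _ (ih hu.1) _ hu.2

theorem pow_mul_measure_pathCylinder_le (h : IsMarkovLaw Q x₀ μ) {m : ℕ} {a b : α}
    (h_path : RelatesInSteps (fun x y => p ≤ Q x y) m a b) {t : ℕ} {u : ℕ → α} (hu : u t = a) :
    p ^ m * μ (pathCylinder t u) ≤ μ (pathCylinder t u ∩ {ω | ω (t + m) = b}) := by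
  induction h_path generalizing t u with
  | refl a =>
    rw [pow_zero, one_mul]
    exact measure_mono fun ω hω => ⟨hω, (hω t le_rfl).trans hu⟩
  | @head m a c b h_step _ ih =>
    obtain ⟨v, hv, h_eq⟩ : ∃ v : ℕ → α, v (t + 1) = c ∧ ∀ s ≤ t, v s = u s :=
      ⟨Function.update u (t + 1) c, Function.update_self .., fun s hs =>
        Function.update_of_ne (by lia) ..⟩
    calc p ^ (m + 1) * μ (pathCylinder t u) = p ^ m * (μ (pathCylinder t v) * p) := by
          rw [pathCylinder_congr h_eq]; ring
      _ ≤ p ^ m * μ (pathCylinder (t + 1) v) := by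
          rw [h.measure_pathCylinder_succ, hv, h_eq t le_rfl, hu]
          gcongr
      _ ≤ μ (pathCylinder (t + 1) v ∩ {ω | ω (t + 1 + m) = b}) := ih hv
      _ ≤ μ (pathCylinder t u ∩ {ω | ω (t + (m + 1)) = b}) := by
          rw [add_assoc, add_comm 1 m, ← pathCylinder_congr h_eq]
          exact measure_mono (Set.inter_subset_inter_left _ (pathCylinder_succ_subset t v))

theorem measure_pathCylinder_diff_le [MeasurableSingletonClass α] (h : IsMarkovLaw Q x₀ μ)
    (hp : p ≤ 1) {m L : ℕ} (hm : m ≤ L) {t : ℕ} {u : ℕ → α} {b : α}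
    (h_path : RelatesInSteps (fun x y => p ≤ Q x y) m (u t) b) :
    μ (pathCylinder t u \ {ω | ω (t + m) = b}) ≤ (1 - p ^ L) * μ (pathCylinder t u) := by
  have := h.1
  have h_meas : MeasurableSet {ω : ℕ → α | ω (t + m) = b} :=
    (measurableSet_singleton b).preimage (measurable_pi_apply (t + m))
  rw [ENNReal.sub_mul fun _ _ => measure_ne_top _ _, one_mul]
  refine ENNReal.le_sub_of_add_le_right
    (ENNReal.mul_ne_top (ENNReal.pow_ne_top (hp.trans_lt ENNReal.one_lt_top).ne)
      (measure_ne_top _ _)) ?_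
  calc μ (pathCylinder t u \ {ω | ω (t + m) = b}) + p ^ L * μ (pathCylinder t u)
      ≤ μ (pathCylinder t u \ {ω | ω (t + m) = b}) + p ^ m * μ (pathCylinder t u) := by
        gcongr _ + ?_ * _
        exact pow_le_pow_right_of_le_one' hp hm
    _ ≤ μ (pathCylinder t u \ {ω | ω (t + m) = b}) +
          μ (pathCylinder t u ∩ {ω | ω (t + m) = b}) := by
        gcongr
        exact h.pow_mul_measure_pathCylinder_le h_path rfl
    _ = μ (pathCylinder t u) := measure_sdiff_add_inter _ h_meas

theorem measure_forall_notMem_add_le [Countable α] [MeasurableSingletonClass α]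
    (h : IsMarkovLaw Q x₀ μ) (h₀ : x₀ ∈ G) (hG : ∀ x ∈ G, ∀ y, Q x y ≠ 0 → y ∈ G) (hp : p ≤ 1)
    {L : ℕ} (hR : ∀ x ∈ G, ∃ y ∈ R, ∃ m, 1 ≤ m ∧ m ≤ L ∧
      RelatesInSteps (fun x y => p ≤ Q x y) m x y) (t : ℕ) :
    μ {ω | ∀ s, 1 ≤ s → s ≤ t + L → ω s ∉ R} ≤
      (1 - p ^ L) * μ {ω | ∀ s, 1 ≤ s → s ≤ t → ω s ∉ R} := by
  have h_sub : {ω : ℕ → α | ∀ s, 1 ≤ s → s ≤ t + L → ω s ∉ R} ⊆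
      {ω | ∀ s, 1 ≤ s → s ≤ t → ω s ∉ R} := fun _ hω s h1 hs => hω s h1 (by lia)
  refine measure_le_mul_of_pathCylinder t h_sub
    (fun u hu ω hω s h1 hs => hω s hs ▸ hu s h1 hs) fun u _ => ?_
  by_cases hu : μ (pathCylinder t u) = 0
  · exact (measure_mono_null Set.inter_subset_left hu).trans_le zero_le
  obtain ⟨y, hy, m, hm, hmL, h_path⟩ := hR _ (h.mem_of_measure_pathCylinder_ne_zero h₀ hG hu)
  refine le_trans (measure_mono ?_) (h.measure_pathCylinder_diff_le hp hmL h_path)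
  exact fun ω ⟨h_cyl, h_avoid⟩ => ⟨h_cyl, fun h_eq => h_avoid (t + m) (by lia) (by lia)
    (h_eq.symm ▸ hy)⟩

theorem measure_forall_notMem_le [Countable α] [MeasurableSingletonClass α]
    (h : IsMarkovLaw Q x₀ μ) (h₀ : x₀ ∈ G) (hG : ∀ x ∈ G, ∀ y, Q x y ≠ 0 → y ∈ G) (hp : p ≤ 1)
    {L : ℕ} (hR : ∀ x ∈ G, ∃ y ∈ R, ∃ m, 1 ≤ m ∧ m ≤ L ∧
      RelatesInSteps (fun x y => p ≤ Q x y) m x y) (t : ℕ) :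
    μ {ω | ∀ s, 1 ≤ s → s ≤ t → ω s ∉ R} ≤ (1 - p ^ L) ^ (t / L) := by
  have := h.1
  have h_block (k : ℕ) : μ {ω | ∀ s, 1 ≤ s → s ≤ k * L → ω s ∉ R} ≤ (1 - p ^ L) ^ k := by
    induction k with
    | zero => simpa using prob_le_one
    | succ k ih =>
      rw [Nat.succ_mul, pow_succ']
      exact (h.measure_forall_notMem_add_le h₀ hG hp hR _).trans (by gcongr)
  have h_sub : {ω : ℕ → α | ∀ s, 1 ≤ s → s ≤ t → ω s ∉ R} ⊆
      {ω | ∀ s, 1 ≤ s → s ≤ t / L * L → ω s ∉ R} :=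
    fun _ hω s h1 hs => hω s h1 (hs.trans (Nat.div_mul_le_self t L))
  exact (measure_mono h_sub).trans (h_block (t / L))

end IsMarkovLaw

end MarkovChain

theorem exists_pow_div_le_two_mul_exp {r : ℝ} (hr : 1 / 2 ≤ r) (hr1 : r < 1) {L : ℕ} (hL : 0 < L) :
    ∃ c > 0, ∀ t : ℕ, r ^ (t / L) ≤ 2 * Real.exp (-c * t) := by
  have h_pos : 0 < r := by linarith
  have h_log : Real.log r < 0 := Real.log_neg h_pos hr1
  have h_L : (0 : ℝ) < L := mod_cast hL
  refine ⟨-Real.log r / L, div_pos (neg_pos.2 h_log) h_L, fun t => ?_⟩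
  have h_t : (t : ℝ) / L ≤ (t / L + 1 : ℕ) :=
    (div_le_iff₀ h_L).2 (mod_cast (Nat.lt_mul_of_div_lt (Nat.lt_succ_self _) hL).le)
  calc r ^ (t / L) ≤ 2 * r ^ (t / L + 1) := by
        rw [pow_succ]
        nlinarith [pow_pos h_pos (t / L)]
    _ = 2 * Real.exp ((t / L + 1 : ℕ) * Real.log r) := by
        rw [Real.exp_nat_mul, Real.exp_log h_pos]
    _ ≤ 2 * Real.exp (t / L * Real.log r) := by
        gcongr ?_ * Real.exp ?_
        exact mul_le_mul_of_nonpos_right h_t h_log.le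
    _ = 2 * Real.exp (-(-Real.log r / L) * t) := by ring_nf

theorem exists_one_sub_pow_pow_div_le_two_mul_exp {p : ℝ} (hp : 0 < p) (hp2 : p ≤ 1 / 2) {L : ℕ}
    (hL : 0 < L) : ∃ c > 0, ∀ t : ℕ,
      (1 - ENNReal.ofReal p ^ L) ^ (t / L) ≤ ENNReal.ofReal (2 * Real.exp (-c * t)) := by
  have h_pow : p ^ L ≤ 1 / 2 := (pow_le_of_le_one hp.le (by linarith) hL.ne').trans hp2
  obtain ⟨c, hc, h_le⟩ := exists_pow_div_le_two_mul_exp (r := 1 - p ^ L) (by linarith)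
    (by linarith [pow_pos hp L]) hL
  refine ⟨c, hc, fun t => ?_⟩
  rw [← ENNReal.ofReal_pow hp.le, ← ENNReal.ofReal_one, ← ENNReal.ofReal_sub _ (by positivity),
    ← ENNReal.ofReal_pow (by linarith)]
  exact ENNReal.ofReal_le_ofReal (h_le t)

/-! ### Exponential tails -/

instance (d : ℕ) : DiscreteMeasurableSpace (ClusteringS d) := ⟨fun _ => trivial⟩

theorem xi_tail_general (d n : ℕ) (hd : 3 ≤ d) (hn : 0 < n) :
    ∃ c : ℝ, 0 < c ∧ ∀ D0 : ClusteringS d, 0 < D0.1 → D0.1 ≤ n → IsDimerTrimer D0.2 →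
      ∀ μ : Measure (ℕ → ClusteringS d), IsIHATLaw d D0 μ → ∀ t : ℕ,
        μ {ω | ∀ s, 1 ≤ s → s ≤ t → ¬ ((ω s).1 = D0.1 ∧ ∀ l, (ω s).2 l ∈ Ref d)} ≤
          ENNReal.ofReal (2 * Real.exp (-c * t)) := by
  have : NeZero d := ⟨by lia⟩
  have : NeZero n := ⟨hn.ne'⟩
  obtain ⟨p, hp, hp_move, hp_half⟩ : ∃ p : ℝ, 0 < p ∧ p ≤ moveBound d n ∧ p ≤ 1 / 2 :=
    ⟨_, lt_min moveBound_pos one_half_pos, min_le_left _ _, min_le_right _ _⟩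
  obtain ⟨c, hc, h_exp⟩ := exists_one_sub_pow_pow_div_le_two_mul_exp hp hp_half
    (by lia : 0 < 2 * n)
  refine ⟨c, hc, fun D0 h₀ h_le hD0 μ hμ t => le_trans ?_ (h_exp t)⟩
  have h_markov : IsMarkovLaw (fun D E => ENNReal.ofReal (ihatProb d D E)) D0 μ :=
    ⟨hμ.1, fun t u => by unfold pathCylinder; convert hμ.2 t u⟩
  refine h_markov.measure_forall_notMem_le (p := ENNReal.ofReal p) (L := 2 * n)
    (G := {D | D.1 = D0.1 ∧ IsDimerTrimer D.2}) (R := {D | D.1 = D0.1 ∧ ∀ l, D.2 l ∈ Ref d})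
    ⟨rfl, hD0⟩ ?_ (ENNReal.ofReal_le_one.2 (by linarith)) ?_ t
  · rintro D ⟨hk, hD⟩ E hDE
    have h_ne : ihatProb d D E ≠ 0 := fun h => hDE (by rw [h, ENNReal.ofReal_zero])
    obtain ⟨hE, hE'⟩ := isDimerTrimer_of_ihatProb_ne_zero h_ne hD
    exact ⟨hE.trans hk, hE'⟩
  · rintro D ⟨hk, hD⟩
    obtain ⟨E, ⟨hE, h_Ref⟩, m, hm, hm', h_path⟩ :=
      exists_relatesInSteps_ihatProb_mem_Ref hd (hk ▸ h₀) (hk ▸ h_le) hD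
    exact ⟨E, ⟨hE.trans hk, h_Ref⟩, m, hm, hm', h_path.mono fun _ _ h =>
      ENNReal.ofReal_le_ofReal (hp_move.trans h)⟩

/-- **Reference times have exponential tails.** For `d ≥ 5`, `n ≥ 4` there is
`c = c(d,n) > 0` such that, for any dimer-or-trimer clustering `D0` of an `n`-element
configuration in `ℤ^d` with distinct clusters `i ≠ j`, under IHAT, the first time `≥ 1`
at which clusters `i` and `j` both belong to `Ref` exceeds `t` with probability at most
`2 e^{−ct}`. -/
theorem xi_tail (d n : ℕ) (hd : 5 ≤ d) (hn : 4 ≤ n) :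
    ∃ c : ℝ, 0 < c ∧
      ∀ D0 : ClusteringS d, IsClusteringConf d n D0 →
        (∀ i, (D0.2 i).card = 2 ∨ (D0.2 i).card = 3) →
        ∀ i j : Fin D0.1, i ≠ j →
          ∀ μ : Measure (ℕ → ClusteringS d), IsIHATLaw d D0 μ →
            ∀ t : ℕ,
              μ {ω | ∀ s, 1 ≤ s → s ≤ t →
                  ¬ ∃ h : (ω s).1 = D0.1,
                    (ω s).2 (Fin.cast h.symm i) ∈ Ref d ∧
                    (ω s).2 (Fin.cast h.symm j) ∈ Ref d} ≤
                ENNReal.ofReal (2 * Real.exp (-c * t)) := by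
  obtain ⟨c, hc, h_tail⟩ := xi_tail_general d n (by lia) (by lia)
  refine ⟨c, hc, fun D0 hD0 h_card i j _ μ hμ t => le_trans (measure_mono ?_)
    (h_tail D0 i.pos hD0.card_le h_card μ hμ t)⟩
  exact fun ω hω s h1 hs ⟨hk, h_Ref⟩ => hω s h1 hs ⟨hk, h_Ref _, h_Ref _⟩

end HATFormal
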